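/- arXiv:1206.0694 — 4 statements merged into one kernel-verified Lean document; each statement's English description precedes it below -/
import Mathlib

section
/- (Sakai) Let A be a C*-algebra. Then every derivation δ : A → A is automatically continuous. -/
open ComplexStarModule Filter Topology

/-- A linear map on a Banach space all of whose real multiples are dissipative is continuous. -/
theorem LinearMap.continuous_of_norm_le_norm_add_smul {E : Type*} [NormedAddCommGroup E]
    [NormedSpace ℝ E] [CompleteSpace E] (D : E →ₗ[ℝ] E)
    (hD : ∀ (t : ℝ) (x : E), ‖x‖ ≤ ‖x + t • D x‖) : Continuous D := by
  refine D.continuous_of_seq_closed_graph fun u x y hu hDu => ?_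
  have hsub : Tendsto (fun n => u n - x) atTop (𝓝 0) := by simpa using hu.sub_const x
  have hDsub : Tendsto (fun n => D (u n - x)) atTop (𝓝 (y - D x)) := by
    simpa using hDu.sub_const (D x)
  obtain ⟨b, hb⟩ : ∃ b, b = y - D x := ⟨_, rfl⟩
  rw [← hb] at hDsub
  have key (c : E) (t : ℝ) (ht : 0 < t) : ‖c‖ ≤ ‖c + b + t • D c‖ := by
    have h1 : ‖t • c‖ ≤ ‖t • c + t • (b + t • D c)‖ := by
      refine le_of_tendsto_of_tendsto (b := atTop) (f := fun n => ‖(u n - x) + t • c‖)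
        (g := fun n => ‖((u n - x) + t • c) + t • (D (u n - x) + t • D c)‖) ?_ ?_ ?_
      · simpa using (hsub.add_const (t • c)).norm
      · simpa using ((hsub.add_const (t • c)).add ((hDsub.add_const (t • D c)).const_smul t)).norm
      · refine Eventually.of_forall fun n => ?_
        have := hD t ((u n - x) + t • c)
        rwa [map_add, map_smul] at this
    rw [← smul_add, norm_smul, norm_smul, ← add_assoc] at h1
    exact le_of_mul_le_mul_left h1 (norm_pos_iff.2 ht.ne')
  have hlim : Tendsto (fun t : ℝ => ‖-b + b + t • D (-b)‖) (𝓝[>] 0) (𝓝 0) := by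
    have : Continuous fun t : ℝ => ‖-b + b + t • D (-b)‖ := by fun_prop
    simpa using (this.tendsto 0).mono_left nhdsWithin_le_nhds
  have hle : ‖-b‖ ≤ 0 := ge_of_tendsto hlim
    (eventually_nhdsWithin_of_forall fun t ht => key (-b) t ht)
  rw [norm_neg, norm_le_zero_iff, hb, sub_eq_zero] at hle
  exact hle

namespace CStarAlgebra

section Ordered

variable {B : Type*} [CStarAlgebra B] [PartialOrder B] [StarOrderedRing B]

/-- The weighted arithmetic-geometric mean inequality for self-adjoint elements. -/
theorem mul_add_mul_le_smul_add_inv_smul {h m : B} (hh : IsSelfAdjoint h) (hm : IsSelfAdjoint m)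
    {t : ℝ} (ht : 0 < t) : h * m + m * h ≤ t • (m * m) + t⁻¹ • (h * h) := by
  have hs : IsSelfAdjoint (t • m - h) := ((IsSelfAdjoint.all t).smul hm).sub hh
  have h0 : 0 ≤ t⁻¹ • ((t • m - h) * (t • m - h)) :=
    smul_nonneg (inv_nonneg.2 ht.le) hs.mul_self_nonneg
  have heq : t⁻¹ • ((t • m - h) * (t • m - h))
      = t • (m * m) + t⁻¹ • (h * h) - (h * m + m * h) := by
    simp only [sub_mul, mul_sub, smul_mul_assoc, mul_smul_comm, smul_sub, smul_smul,
      inv_mul_cancel₀ ht.ne', ← mul_assoc, one_mul, one_smul]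
    abel
  rw [heq] at h0
  exact sub_nonneg.1 h0

/-- If `h * h + (h * m + m * h)` is bounded below by a positive scalar, then `h * h` is
invertible. -/
theorem isUnit_mul_self_of_algebraMap_le {h m : B} (hh : IsSelfAdjoint h) (hm : IsSelfAdjoint m)
    {ε : ℝ} (hε : 0 < ε) (hle : algebraMap ℝ B ε ≤ h * h + (h * m + m * h)) :
    IsUnit (h * h) := by
  obtain ⟨t, ht, htε⟩ : ∃ t : ℝ, 0 < t ∧ t * ‖m‖ ^ 2 ≤ ε / 2 := by
    refine ⟨ε / 2 / (‖m‖ ^ 2 + 1), by positivity, ?_⟩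
    rw [div_mul_eq_mul_div, div_le_iff₀ (by positivity)]
    nlinarith
  have hmm : m * m ≤ algebraMap ℝ B (‖m‖ ^ 2) := by
    simpa [hm.star_eq] using star_mul_le_algebraMap_norm_sq (a := m)
  have htm : t • (m * m) ≤ algebraMap ℝ B (ε / 2) := by
    refine (smul_le_smul_of_nonneg_left hmm ht.le).trans ?_
    rw [Algebra.smul_def, ← map_mul]
    exact algebraMap_mono B htε
  have hlow : algebraMap ℝ B (ε / 2) ≤ (1 + t⁻¹) • (h * h) := by
    have h1 := hle.trans (add_le_add_right (mul_add_mul_le_smul_add_inv_smul hh hm ht) _)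
    have h2 := h1.trans (add_le_add_right (add_le_add_left htm _) _)
    have h3 : algebraMap ℝ B ε = algebraMap ℝ B (ε / 2) + algebraMap ℝ B (ε / 2) := by
      rw [← map_add, add_halves]
    rw [h3, add_left_comm] at h2
    rw [add_smul, one_smul]
    exact le_of_add_le_add_left h2
  have hpos : 0 < 1 + t⁻¹ := by positivity
  have hunit : IsUnit ((1 + t⁻¹) • (h * h)) := by
    refine isUnit_of_le (algebraMap ℝ B (ε / 2)) hlow ?_
    exact ((isUnit_iff_ne_zero.2 (half_pos hε).ne').map (algebraMap ℝ B)).isStrictlyPositive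
      (algebraMap_nonneg B (half_pos hε).le)
  have := hunit.smul (Units.mk0 _ hpos.ne')⁻¹
  simpa [Units.smul_def, smul_smul, hpos.ne'] using this

/-- A derivation on a unital C⋆-algebra is dissipative on self-adjoint elements whose norm lies
in their spectrum. -/
theorem norm_le_norm_add_realPart_of_norm_mem_spectrum {δ : B →ₗ[ℂ] B}
    (hδ : ∀ a b : B, δ (a * b) = δ a * b + a * δ b) {a : B} (ha : IsSelfAdjoint a)
    (hspec : ‖a‖ ∈ spectrum ℝ a) : ‖a‖ ≤ ‖a + (ℜ (δ a) : B)‖ := by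
  by_contra! hlt
  obtain ⟨h, hh, hsq⟩ : ∃ h : B, IsSelfAdjoint h ∧ h * h = algebraMap ℝ B ‖a‖ - a :=
    ⟨CFC.sqrt (algebraMap ℝ B ‖a‖ - a), (CFC.sqrt_nonneg _).isSelfAdjoint,
      CFC.sqrt_mul_sqrt_self _ (sub_nonneg.2 ha.le_algebraMap_norm_self)⟩
  have hone : δ 1 = 0 := by simpa using hδ 1 1
  have hδa : δ a = -(δ h * h + h * δ h) := by
    have h1 : δ (algebraMap ℝ B ‖a‖) = 0 := by
      rw [IsScalarTower.algebraMap_apply ℝ ℂ B, Algebra.algebraMap_eq_smul_one, map_smul, hone,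
        smul_zero]
    rw [← hδ, hsq, map_sub, h1, zero_sub, neg_neg]
  have hre : (ℜ (δ a) : B) = -(h * (ℜ (δ h) : B) + (ℜ (δ h) : B) * h) := by
    simp only [hδa, realPart_apply_coe, star_neg, star_add, star_mul, hh.star_eq, mul_smul_comm,
      smul_mul_assoc, mul_add, add_mul, ← smul_add, ← smul_neg]
    congr 1
    abel
  have hy : IsSelfAdjoint (a + (ℜ (δ a) : B)) := ha.add (ℜ (δ a)).2
  have hle : algebraMap ℝ B (‖a‖ - ‖a + (ℜ (δ a) : B)‖)
      ≤ h * h + (h * (ℜ (δ h) : B) + (ℜ (δ h) : B) * h) := by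
    have h1 : h * h + (h * (ℜ (δ h) : B) + (ℜ (δ h) : B) * h)
        = algebraMap ℝ B ‖a‖ - (a + (ℜ (δ a) : B)) := by
      rw [hsq, hre]; abel
    rw [h1, map_sub]
    exact sub_le_sub_left hy.le_algebraMap_norm_self _
  have hu := isUnit_mul_self_of_algebraMap_le hh (ℜ (δ h)).2 (sub_pos.2 hlt) hle
  rw [hsq] at hu
  exact hspec hu

/-- A derivation on a unital C⋆-algebra is dissipative on self-adjoint elements. -/
theorem norm_le_norm_add_realPart_derivation {δ : B →ₗ[ℂ] B}
    (hδ : ∀ a b : B, δ (a * b) = δ a * b + a * δ b) {a : B} (ha : IsSelfAdjoint a) :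
    ‖a‖ ≤ ‖a + (ℜ (δ a) : B)‖ := by
  nontriviality B
  rcases norm_or_neg_norm_mem_spectrum ha with h | h
  · exact norm_le_norm_add_realPart_of_norm_mem_spectrum hδ ha h
  · have h' : ‖-a‖ ∈ spectrum ℝ (-a) := by
      rw [norm_neg, ← spectrum.neg_eq]
      simpa using h
    have := norm_le_norm_add_realPart_of_norm_mem_spectrum hδ ha.neg h'
    rwa [map_neg, map_neg, AddSubgroup.coe_neg, ← neg_add, norm_neg, norm_neg] at this

end Ordered

variable {B : Type*} [CStarAlgebra B]

/-- The real part of a derivation is continuous on the self-adjoint elements. -/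
theorem continuous_realPart_derivation {δ : B →ₗ[ℂ] B}
    (hδ : ∀ a b : B, δ (a * b) = δ a * b + a * δ b) :
    Continuous fun a : selfAdjoint B => ℜ (δ a) := by
  let _ := spectralOrder B
  have _ := spectralOrderedRing B
  let D : selfAdjoint B →ₗ[ℝ] selfAdjoint B :=
    realPart ∘ₗ δ.restrictScalars ℝ ∘ₗ (selfAdjoint.submodule ℝ B).subtype
  have : CompleteSpace (selfAdjoint B) := 
    (isClosed_eq continuous_star continuous_id).completeSpace_coe
  refine D.continuous_of_norm_le_norm_add_smul fun t x => ?_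
  have ht : ∀ a b : B, ((t : ℂ) • δ) (a * b) = ((t : ℂ) • δ) a * b + a * ((t : ℂ) • δ) b :=
    fun a b => by simp [hδ]
  have := norm_le_norm_add_realPart_derivation ht x.2
  rw [LinearMap.smul_apply, Complex.coe_smul, map_smul] at this
  exact this

/-- A derivation on a unital C⋆-algebra is continuous. -/
theorem continuous_derivation {δ : B →ₗ[ℂ] B}
    (hδ : ∀ a b : B, δ (a * b) = δ a * b + a * δ b) : Continuous δ := by
  have hI : ∀ a b : B, (-Complex.I • δ) (a * b)
      = (-Complex.I • δ) a * b + a * (-Complex.I • δ) b := fun a b => by simp [hδ]; abel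
  have hsa : Continuous fun a : selfAdjoint B => δ a := by
    have h1 := continuous_subtype_val.comp (continuous_realPart_derivation hδ)
    have h2 := continuous_subtype_val.comp (continuous_realPart_derivation hI)
    convert h1.add (h2.const_smul Complex.I) using 2 with a
    conv_lhs => rw [← realPart_add_I_smul_imaginaryPart (δ a)]
    simp [realPart_I_smul]
  have hre : Continuous fun a : B => ℜ a := by
    refine Continuous.subtype_mk ?_ _
    fun_prop
  have him : Continuous fun a : B => ℑ a := by
    have : (fun a : B => ℑ a) = fun a => ℜ (-Complex.I • a) := by
      ext a; simp [realPart_I_smul]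
    rw [this]
    exact hre.comp (continuous_const_smul _)
  convert (hsa.comp hre).add ((hsa.comp him).const_smul Complex.I)
  ext a
  conv_lhs => rw [← realPart_add_I_smul_imaginaryPart a, map_add, map_smul]
  rfl

end CStarAlgebra


/-- (Sakai) Every derivation on a C*-algebra is automatically continuous. -/
theorem sakai_automatic_continuity (A : Type*) [NonUnitalNormedRing A] [StarRing A]
    [CStarRing A] [CompleteSpace A] [NormedSpace ℂ A] [IsScalarTower ℂ A A]
    [SMulCommClass ℂ A A] [StarModule ℂ A]
    (δ : A →ₗ[ℂ] A)
    (hδ : ∀ a b : A, δ (a * b) = δ a * b + a * δ b) :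
    Continuous δ := by
  let _ : NonUnitalCStarAlgebra A :=
    { smul_assoc := smul_assoc, smul_comm := smul_comm, star_smul := star_smul }
  let Δ : Unitization ℂ A →ₗ[ℂ] Unitization ℂ A :=
    Unitization.inrHom ℂ ℂ A ∘ₗ δ ∘ₗ Unitization.sndHom ℂ ℂ A
  have hΔ : ∀ x y : Unitization ℂ A, Δ (x * y) = Δ x * y + x * Δ y := by
    intro x y
    ext
    · simp [Δ]
    · simp [Δ, hδ]
      abel
  have hcont : Continuous fun a : A => (Δ a).snd :=
    Unitization.continuous_snd.comp
      ((CStarAlgebra.continuous_derivation hΔ).comp Unitization.continuous_inr)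
  simpa [Δ] using hcont
end

section
/- (Sakai–Kadison) Let M be a von Neumann algebra acting on a complex Hilbert space H. Then every derivation D : M → M (a linear map satisfying D(xy) = D(x)y + xD(y), not assumed continuous) is inner: there exists a ∈ M such that D(x) = ax − xa for all x ∈ M. -/
open Complex Metric Filter Topology

section HermitianElement

variable {B : Type*} [NormedRing B] [NormedAlgebra ℂ B]

theorem sub_mul_resolvent {T : B} {z : ℂ} (hz : z ∈ resolventSet ℂ T) :
    (algebraMap ℂ B z - T) * resolvent T z = 1 :=
  Ring.mul_inverse_cancel _ hz

theorem resolvent_mul_sub {T : B} {z : ℂ} (hz : z ∈ resolventSet ℂ T) :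
    resolvent T z * (algebraMap ℂ B z - T) = 1 :=
  Ring.inverse_mul_cancel _ hz

theorem commute_resolvent (T : B) (z : ℂ) : Commute T (resolvent T z) := by
  by_cases h : IsUnit (algebraMap ℂ B z - T)
  · obtain ⟨u, hu⟩ := h
    have h1 : Commute T (u : B) := by
      rw [hu]
      exact (Algebra.commute_algebraMap_right z T).sub_right (Commute.refl T)
    rw [resolvent, ← hu, Ring.inverse_unit]
    exact h1.units_inv_right
  · rw [resolvent, Ring.inverse_non_unit _ h]
    exact Commute.zero_right T

/-- The resolvent growth of a Hermitian element of a Banach algebra. -/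
def IsResolventHermitian (T : B) : Prop :=
  ∀ z : ℂ, z.im ≠ 0 → z ∈ resolventSet ℂ T ∧ |z.im| * ‖resolvent T z‖ ≤ 1

/-- A polynomial vanishing where the circle of centre `μ` and radius `r` meets the real axis. -/
def circleWeight (μ r : ℝ) (z : ℂ) : ℂ := (z - μ) ^ 2 - r ^ 2

theorem norm_circleWeight {μ r : ℝ} {z : ℂ} (hz : z ∈ sphere (μ : ℂ) r) :
    ‖circleWeight μ r z‖ = 2 * r * |z.im| := by
  have hr : ‖z - μ‖ = r := by simpa [dist_eq_norm] using hz
  have h : circleWeight μ r z = (z - μ) * (2 * I * z.im) := by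
    have h1 : (r : ℂ) ^ 2 = (z - μ) * (starRingEnd ℂ) (z - μ) := by
      rw [mul_conj, normSq_eq_norm_sq, hr]; norm_cast
    have h2 : (z.im : ℂ) * (2 * I) = z - (starRingEnd ℂ) z := by
      rw [Complex.sub_conj]; push_cast; ring
    rw [circleWeight, h1, map_sub, conj_ofReal]
    linear_combination -(z - μ) * h2
  rw [h, norm_mul, hr]; simp; ring

theorem continuous_circleWeight (μ r : ℝ) : Continuous (circleWeight μ r) := by
  unfold circleWeight; fun_prop

theorem differentiable_circleWeight (μ r : ℝ) : Differentiable ℂ (circleWeight μ r) := by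
  unfold circleWeight; fun_prop

theorem mul_circleIntegral [CompleteSpace B] (a : B) {f : ℂ → B} {c : ℂ} {r : ℝ}
    (hf : CircleIntegrable f c r) :
    a * (∮ z in C(c, r), f z) = ∮ z in C(c, r), a * f z := by
  have h := (ContinuousLinearMap.mul ℂ B a).intervalIntegral_comp_comm hf.out
  simpa [circleIntegral] using h.symm

theorem circleIntegral_mul [CompleteSpace B] (a : B) {f : ℂ → B} {c : ℂ} {r : ℝ}
    (hf : CircleIntegrable f c r) :
    (∮ z in C(c, r), f z) * a = ∮ z in C(c, r), f z * a := by
  have h := ((ContinuousLinearMap.mul ℂ B).flip a).intervalIntegral_comp_comm hf.out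
  simpa [circleIntegral] using h.symm

namespace IsResolventHermitian

variable {T : B}

theorem norm_circleWeight_smul_le (hT : IsResolventHermitian T) {μ r : ℝ} (hr : 0 ≤ r) {z : ℂ}
    (hz : z ∈ sphere (μ : ℂ) r) : ‖circleWeight μ r z • resolvent T z‖ ≤ 2 * r := by
  rw [norm_smul, norm_circleWeight hz]
  by_cases h : z.im = 0
  · simp [h, hr]
  · have := (hT z h).2
    calc _ = 2 * r * (|z.im| * ‖resolvent T z‖) := by ring
      _ ≤ 2 * r * 1 := by gcongr
      _ = 2 * r := by ring

variable [CompleteSpace B]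

theorem continuousOn_weighted (hT : IsResolventHermitian T) {μ r : ℝ} (hr : 0 ≤ r) :
    ContinuousOn (fun z => circleWeight μ r z ^ 2 • resolvent T z) (sphere (μ : ℂ) r) := by
  intro z hz
  by_cases h : z.im = 0
  · have h0 : circleWeight μ r z = 0 := by
      rw [← norm_eq_zero, norm_circleWeight hz, h]; simp
    have key : ∀ w ∈ sphere (μ : ℂ) r,
        ‖circleWeight μ r w ^ 2 • resolvent T w‖ ≤ ‖circleWeight μ r w‖ * (2 * r) := by
      intro w hw
      rw [pow_two, mul_smul, norm_smul]
      exact mul_le_mul_of_nonneg_left (hT.norm_circleWeight_smul_le hr hw) (norm_nonneg _)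
    have hlim : Tendsto (fun w => ‖circleWeight μ r w‖ * (2 * r)) (𝓝[sphere (μ : ℂ) r] z) (𝓝 0) := by
      have := ((continuous_circleWeight μ r).norm.mul_const (2 * r)).tendsto z
      simp only [h0, norm_zero, zero_mul] at this
      exact this.mono_left nhdsWithin_le_nhds
    have h1 := squeeze_zero_norm' (eventually_nhdsWithin_of_forall key) hlim
    simpa [ContinuousWithinAt, h0] using h1
  · have hR := (spectrum.hasDerivAt_resolvent_const_left (hT z h).1).continuousAt
    exact (((continuous_circleWeight μ r).continuousAt.pow 2).smul hR).continuousWithinAt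

/-- If no nonzero element decays like a spectral subspace of `(a, ∞)`, then `(a, ∞)` lies in the
resolvent set. -/
theorem mem_resolventSet_of_lt (hT : IsResolventHermitian T) {a : ℝ}
    (ha : ∀ l : ℝ, a < l → ∀ F : B, (∃ K C : ℝ, l ≤ K ∧
      ∀ n : ℕ, ‖(algebraMap ℂ B K - T) ^ n * F‖ ≤ C * (K - l) ^ n) → F = 0)
    {s : ℝ} (hs : a < s) : (s : ℂ) ∈ resolventSet ℂ T := by
  obtain ⟨r, hr, hra⟩ : ∃ r : ℝ, 0 < r ∧ a < s - r := ⟨(s - a) / 2, by linarith, by linarith⟩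
  have hr0 := hr.le
  have hc := hT.continuousOn_weighted (μ := s) hr0
  have hmem : ∀ z ∈ sphere (s : ℂ) r, circleWeight s r z = 0 ∨ z ∈ resolventSet ℂ T := by
    intro z hz
    by_cases h : z.im = 0
    · left; rw [← norm_eq_zero, norm_circleWeight hz, h]; simp
    · exact .inr (hT z h).1
  set G : ℂ → B := fun z => circleWeight s r z ^ 2 • resolvent T z with hG
  have hpow : ∀ n : ℕ, (algebraMap ℂ B s - T) ^ n * (∮ z in C((s : ℂ), r), G z) =
      ∮ z in C((s : ℂ), r), ((s : ℂ) - z) ^ n • G z := by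
    intro n
    induction n with
    | zero => simp
    | succ n ih =>
      have hcn : ContinuousOn (fun z => ((s : ℂ) - z) ^ n • G z) (sphere (s : ℂ) r) :=
        (by fun_prop : Continuous fun z => ((s : ℂ) - z) ^ n).continuousOn.smul hc
      have hcn' : ContinuousOn (fun z => ((s : ℂ) - z) ^ (n + 1) • G z) (sphere (s : ℂ) r) :=
        (by fun_prop : Continuous fun z => ((s : ℂ) - z) ^ (n + 1)).continuousOn.smul hc
      have hd : Differentiable ℂ fun z => (((s : ℂ) - z) ^ n * circleWeight s r z ^ 2) • (1 : B) := by
        have := differentiable_circleWeight s r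
        fun_prop
      rw [pow_succ', mul_assoc, ih, mul_circleIntegral _ (hcn.circleIntegrable hr0)]
      have hzero := hd.diffContOnCl.circleIntegral_eq_zero (c := (s : ℂ)) hr0
      rw [← add_zero (∮ z in C((s : ℂ), r), ((s : ℂ) - z) ^ (n + 1) • G z), ← hzero,
        ← circleIntegral.integral_add (hcn'.circleIntegrable hr0)
          (hd.continuous.continuousOn.circleIntegrable hr0)]
      refine circleIntegral.integral_congr hr0 fun z hz => ?_
      rcases hmem z hz with h | h
      · simp [hG, h]
      · have h1 := sub_mul_resolvent h
        have h2 : (algebraMap ℂ B s - T) * resolvent T z = ((s : ℂ) - z) • resolvent T z + 1 := by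
          rw [← h1, sub_mul, sub_mul, sub_smul, Algebra.smul_def, Algebra.smul_def]; abel
        simp only [hG, mul_smul_comm, h2, smul_add, smul_smul]
        congr 2; ring
  have hF : (∮ z in C((s : ℂ), r), G z) = 0 := by
    refine ha (s - r) hra _ ⟨s, 2 * Real.pi * r * (2 * r * |r| * (2 * r)), by linarith, fun n => ?_⟩
    rw [hpow n]
    refine (circleIntegral.norm_integral_le_of_norm_le_const hr0
      (C := r ^ n * (2 * r * |r| * (2 * r))) fun z hz => ?_).trans (le_of_eq (by ring))
    have hzr : ‖(s : ℂ) - z‖ = r := by simpa [dist_eq_norm, norm_sub_rev] using hz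
    have him : |z.im| ≤ |r| := by
      have := abs_im_le_norm ((s : ℂ) - z)
      rw [hzr] at this
      exact (by simpa using this : |z.im| ≤ r).trans (le_abs_self r)
    simp only [hG]
    rw [norm_smul, norm_pow, hzr, pow_two, mul_smul, norm_smul]
    gcongr
    · rw [norm_circleWeight hz]; gcongr
    · exact hT.norm_circleWeight_smul_le hr0 hz
  have hne : ∀ z ∈ sphere (s : ℂ) r, z - s ≠ 0 := by
    intro z hz h
    have : ‖z - s‖ = r := by simpa [dist_eq_norm] using hz
    rw [h, norm_zero] at this; linarith
  have hcJ : ContinuousOn (fun z => (z - (s : ℂ))⁻¹ • G z) (sphere (s : ℂ) r) :=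
    ((by fun_prop : Continuous fun z : ℂ => z - s).continuousOn.inv₀ hne).smul hc
  have hiJ := hcJ.circleIntegrable hr0
  set J := ∮ z in C((s : ℂ), r), (z - (s : ℂ))⁻¹ • G z with hJ
  have hd : Differentiable ℂ fun z => (circleWeight s r z ^ 2) • (1 : B) := by
    have := differentiable_circleWeight s r
    fun_prop
  have hmul : (algebraMap ℂ B s - T) * J =
      (2 * Real.pi * I : ℂ) • ((circleWeight s r s ^ 2) • (1 : B)) := by
    have hball : (s : ℂ) ∈ ball (s : ℂ) r := by simpa using hr
    have hcauchy := hd.diffContOnCl.circleIntegral_sub_inv_smul hball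
    have hc1 : ContinuousOn (fun z => (z - (s : ℂ))⁻¹ • (circleWeight s r z ^ 2) • (1 : B))
        (sphere (s : ℂ) r) :=
      ((by fun_prop : Continuous fun z : ℂ => z - s).continuousOn.inv₀ hne).smul
        hd.continuous.continuousOn
    rw [← hcauchy, hJ, mul_circleIntegral _ hiJ,
      ← sub_zero (∮ z in C((s : ℂ), r), (z - (s : ℂ))⁻¹ • circleWeight s r z ^ 2 • (1 : B)), ← hF,
      ← circleIntegral.integral_sub (hc1.circleIntegrable hr0) (hc.circleIntegrable hr0)]
    refine circleIntegral.integral_congr hr0 fun z hz => ?_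
    rcases hmem z hz with h | h
    · simp [hG, h]
    · have h1 := sub_mul_resolvent h
      have h2 : (algebraMap ℂ B s - T) * resolvent T z = 1 - (z - (s : ℂ)) • resolvent T z := by
        rw [← h1, sub_mul, sub_mul, sub_smul, Algebra.smul_def, Algebra.smul_def]; abel
      have h3 := hne z hz
      simp only [hG, mul_smul_comm, h2, smul_sub, smul_smul]
      congr 2; field_simp
  have hcomm : Commute (algebraMap ℂ B s - T) J := by
    rw [Commute, SemiconjBy, hJ, mul_circleIntegral _ hiJ, circleIntegral_mul _ hiJ]
    refine circleIntegral.integral_congr hr0 fun z _ => ?_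
    have : Commute (algebraMap ℂ B s - T) (resolvent T z) :=
      (Algebra.commute_algebraMap_left (s : ℂ) _).sub_left (commute_resolvent T z)
    simp only [hG, mul_smul_comm, smul_mul_assoc, this.eq]
  have hw : (2 * Real.pi * I : ℂ) * circleWeight s r s ^ 2 ≠ 0 := by
    simp [circleWeight, hr.ne']
  rw [smul_smul] at hmul
  set c := (2 * Real.pi * I : ℂ) * circleWeight s r s ^ 2
  rw [spectrum.mem_resolventSet_iff]
  refine ⟨⟨algebraMap ℂ B s - T, c⁻¹ • J, ?_, ?_⟩, rfl⟩
  · rw [mul_smul_comm, hmul, smul_smul, inv_mul_cancel₀ hw, one_smul]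
  · rw [smul_mul_assoc, ← hcomm.eq, hmul, smul_smul, inv_mul_cancel₀ hw, one_smul]

theorem circleIntegral_resolvent {p : ℝ} (hp : 0 < p)
    (h : ∀ z : ℂ, p ≤ ‖z‖ → z ∈ resolventSet ℂ T) :
    (∮ z in C(0, p), resolvent T z) = (2 * Real.pi * I : ℂ) • (1 : B) := by
  have hdiff : ∀ z : ℂ, p ≤ ‖z‖ → DifferentiableAt ℂ (fun z => z • resolvent T z) z := fun z hz =>
    differentiableAt_id.smul (spectrum.hasDerivAt_resolvent_const_left (h z hz)).differentiableAt
  have hne : ∀ {K : ℝ}, p ≤ K → ∀ z ∈ sphere (0 : ℂ) K, p ≤ ‖z‖ ∧ ‖z‖ = K ∧ z ≠ 0 := by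
    intro K hK z hz
    have : ‖z‖ = K := by simpa using hz
    exact ⟨this ▸ hK, this, norm_pos_iff.1 (by rw [this]; linarith)⟩
  have hann : ∀ K : ℝ, p ≤ K → (∮ z in C(0, p), resolvent T z) =
      (2 * Real.pi * I : ℂ) • (1 : B) + ∮ z in C(0, K), z⁻¹ • (T * resolvent T z) := by
    intro K hK
    have hK0 : 0 < K := hp.trans_le hK
    have h1 := circleIntegral_sub_center_inv_smul_eq_of_differentiable_on_annulus_off_countable
      (c := 0) hp hK (f := fun z => z • resolvent T z) (s := ∅) Set.countable_empty
      (fun z hz => (hdiff z (by simpa using hz.2)).continuousAt.continuousWithinAt)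
      (fun z hz => hdiff z (by
        have := hz.1.2
        simp only [mem_closedBall, dist_zero_right, not_le] at this
        exact this.le))
    have h2 : (∮ z in C(0, p), resolvent T z) = ∮ z in C(0, p), (z - 0)⁻¹ • z • resolvent T z :=
      circleIntegral.integral_congr hp.le fun z hz => by
        simp [smul_smul, inv_mul_cancel₀ (hne le_rfl z hz).2.2]
    have hcauchy : (∮ z in C(0, K), (z - 0)⁻¹ • (1 : B)) = (2 * Real.pi * I : ℂ) • (1 : B) := by
      rw [circleIntegral.integral_smul_const, circleIntegral.integral_sub_center_inv _ hK0.ne']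
    have hinv : ContinuousOn (fun z : ℂ => z⁻¹) (sphere 0 K) :=
      continuousOn_id.inv₀ fun z hz => (hne hK z hz).2.2
    have hR : ContinuousOn (resolvent T) (sphere (0 : ℂ) K) := fun z hz =>
      (spectrum.hasDerivAt_resolvent_const_left
        (h z (hne hK z hz).1)).continuousAt.continuousWithinAt
    rw [h2, ← h1, ← hcauchy, ← circleIntegral.integral_add]
    · refine circleIntegral.integral_congr hK0.le fun z hz => ?_
      have h3 : z • resolvent T z = 1 + T * resolvent T z := by
        rw [← sub_mul_resolvent (h z (hne hK z hz).1), sub_mul, Algebra.smul_def]; abel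
      simp only [h3, smul_add, sub_zero]
    · simp only [sub_zero]
      exact (hinv.smul continuousOn_const).circleIntegrable hK0.le
    · exact (hinv.smul (continuousOn_const.mul hR)).circleIntegrable hK0.le
  rw [← sub_eq_zero, ← norm_le_zero_iff]
  refine le_of_forall_pos_le_add fun e he => ?_
  obtain ⟨δ, hδ, hδe⟩ : ∃ δ : ℝ, 0 < δ ∧ 2 * Real.pi * ‖T‖ * δ ≤ e := by
    refine ⟨e / (2 * Real.pi * ‖T‖ + 1), by positivity, ?_⟩
    rw [← mul_div_assoc, div_le_iff₀ (by positivity)]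
    nlinarith [Real.pi_pos, norm_nonneg T]
  have htend := (spectrum.resolvent_tendsto_cobounded (𝕜 := ℂ) T).norm
  rw [norm_zero] at htend
  have hev := (tendsto_order.1 htend).2 δ hδ
  obtain ⟨K, hK, hK'⟩ := (hasBasis_cobounded_norm (E := ℂ)).eventually_iff.1 hev
  set L := max p K
  have hL : 0 < L := hp.trans_le (le_max_left _ _)
  rw [hann L (le_max_left _ _), add_sub_cancel_left, zero_add]
  refine (circleIntegral.norm_integral_le_of_norm_le_const hL.le (C := L⁻¹ * (‖T‖ * δ))
    fun z hz => ?_).trans (le_trans (le_of_eq ?_) hδe)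
  · obtain ⟨_, hzL, _⟩ := hne (le_max_left p K) z hz
    rw [norm_smul, norm_inv, hzL]
    gcongr
    refine (norm_mul_le _ _).trans ?_
    gcongr
    exact (hK' (by simp [hzL])).le
  · field_simp

theorem norm_le_of_resolventSet (hT : IsResolventHermitian T) (h1 : ‖(1 : B)‖ ≤ 1) {p : ℝ}
    (hp : 0 < p) (h : ∀ z : ℂ, p ≤ ‖z‖ → z ∈ resolventSet ℂ T) : ‖T‖ ≤ 5 * p := by
  have hne : ∀ z ∈ sphere (0 : ℂ) p, p ≤ ‖z‖ := by
    intro z hz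
    have : ‖z‖ = p := by simpa using hz
    exact this.ge
  have hR : ContinuousOn (resolvent T) (sphere (0 : ℂ) p) := fun z hz =>
    (spectrum.hasDerivAt_resolvent_const_left (h z (hne z hz))).continuousAt.continuousWithinAt
  have hsq : ‖T ^ 2 - algebraMap ℂ B (p ^ 2)‖ ≤ 2 * p ^ 2 := by
    have hlin : ContinuousOn (fun z : ℂ => algebraMap ℂ B z + T) (sphere 0 p) :=
      ((continuous_algebraMap ℂ B).add continuous_const).continuousOn
    have hd : Differentiable ℂ fun z : ℂ => algebraMap ℂ B z + T := by
      simp only [Algebra.algebraMap_eq_smul_one]; fun_prop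
    have hzero := hd.diffContOnCl.circleIntegral_eq_zero (c := 0) hp.le
    have hc0 : ContinuousOn (fun z => (T ^ 2 - algebraMap ℂ B (p ^ 2)) * resolvent T z)
        (sphere (0 : ℂ) p) := continuousOn_const.mul hR
    have hint : (∮ z in C(0, p), circleWeight 0 p z • resolvent T z) =
        (2 * Real.pi * I : ℂ) • (T ^ 2 - algebraMap ℂ B (p ^ 2)) := by
      rw [← mul_one (T ^ 2 - algebraMap ℂ B (p ^ 2)), ← mul_smul_comm,
        ← circleIntegral_resolvent hp h, mul_circleIntegral _ (hR.circleIntegrable hp.le),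
        ← add_zero (∮ z in C(0, p), (T ^ 2 - algebraMap ℂ B (p ^ 2)) * resolvent T z), ← hzero,
        ← circleIntegral.integral_add
          (hc0.circleIntegrable hp.le) (hlin.circleIntegrable hp.le)]
      refine circleIntegral.integral_congr hp.le fun z hz => ?_
      have h2 := sub_mul_resolvent (h z (hne z hz))
      have h3 : algebraMap ℂ B z + T = (algebraMap ℂ B z + T) * ((algebraMap ℂ B z - T) *
        resolvent T z) := by rw [h2, mul_one]
      have hc : algebraMap ℂ B z * T = T * algebraMap ℂ B z := Algebra.commutes _ _
      rw [h3, ← mul_assoc, ← add_mul, Algebra.smul_def, circleWeight]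
      congr 1
      simp only [ofReal_zero, sub_zero, map_sub, map_mul, add_mul, mul_sub, hc, pow_two]
      abel
    have hb := circleIntegral.norm_integral_le_of_norm_le_const hp.le
      (f := fun z => circleWeight 0 p z • resolvent T z) (c := 0) (C := 2 * p)
      fun z hz => hT.norm_circleWeight_smul_le hp.le (by simpa using hz)
    rw [hint, norm_smul] at hb
    have hpi : ‖(2 * Real.pi * I : ℂ)‖ = 2 * Real.pi := by
      simp [abs_of_pos Real.pi_pos]
    rw [hpi] at hb
    have : 0 < 2 * Real.pi := by positivity
    nlinarith
  have him : (I * p : ℂ).im ≠ 0 := by simpa using hp.ne'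
  obtain ⟨hres, hbd⟩ := hT (I * p) him
  have hbd' : p * ‖resolvent T (I * p)‖ ≤ 1 := by simpa [abs_of_pos hp] using hbd
  have hnum : ‖T ^ 2 - algebraMap ℂ B (p ^ 2) + algebraMap ℂ B (2 * p ^ 2)‖ ≤ 4 * p ^ 2 := by
    refine (norm_add_le _ _).trans ?_
    have : ‖algebraMap ℂ B (2 * (p : ℂ) ^ 2)‖ ≤ 2 * p ^ 2 := by
      rw [norm_algebraMap]
      calc _ ≤ ‖2 * (p : ℂ) ^ 2‖ * 1 := by gcongr
        _ = 2 * p ^ 2 := by simp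
    linarith
  have hTeq : T = -(resolvent T (I * p) *
      (T ^ 2 - algebraMap ℂ B (p ^ 2) + algebraMap ℂ B (2 * p ^ 2))) - algebraMap ℂ B (I * p) := by
    have h2 := resolvent_mul_sub hres
    have hc : algebraMap ℂ B (I * p) * T = T * algebraMap ℂ B (I * p) := Algebra.commutes _ _
    have h3 : T ^ 2 - algebraMap ℂ B (p ^ 2) + algebraMap ℂ B (2 * p ^ 2) =
        -((algebraMap ℂ B (I * p) - T) * (algebraMap ℂ B (I * p) + T)) := by
      have h4 : algebraMap ℂ B (I * p) * algebraMap ℂ B (I * p) = -algebraMap ℂ B (p ^ 2) := by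
        rw [← map_mul, ← map_neg]
        congr 1
        linear_combination (p : ℂ) ^ 2 * I_mul_I
      rw [sub_mul, mul_add, mul_add, h4, hc, two_mul, map_add, pow_two T]
      abel
    rw [h3, mul_neg, neg_neg, ← mul_assoc, h2, one_mul, add_sub_cancel_left]
  rw [hTeq]
  refine (norm_sub_le _ _).trans ?_
  rw [norm_neg]
  have e1 : ‖algebraMap ℂ B (I * p)‖ ≤ p := by
    rw [norm_algebraMap]
    calc _ ≤ ‖I * (p : ℂ)‖ * 1 := by gcongr
      _ = p := by simp [abs_of_pos hp]
  have e2 : ‖resolvent T (I * p) * (T ^ 2 - algebraMap ℂ B (p ^ 2) +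
      algebraMap ℂ B (2 * p ^ 2))‖ ≤ 4 * p := by
    refine (norm_mul_le _ _).trans ?_
    calc _ ≤ ‖resolvent T (I * p)‖ * (4 * p ^ 2) := by gcongr
      _ = (p * ‖resolvent T (I * p)‖) * (4 * p) := by ring
      _ ≤ 1 * (4 * p) := by gcongr
      _ = 4 * p := by ring
  linarith

end IsResolventHermitian

end HermitianElement

section NumericalRange

variable {E : Type*} [NormedAddCommGroup E] [NormedSpace ℂ E]

theorem im_mul_norm_resolvent_le {N : E →L[ℂ] E}
    (hN : ∀ (z : ℂ) (x : E), |z.im| * ‖x‖ ≤ ‖z • x - N x‖) {z : ℂ} (hz : z.im ≠ 0)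
    (h : z ∈ resolventSet ℂ N) : |z.im| * ‖resolvent N z‖ ≤ 1 := by
  have h0 : 0 < |z.im| := abs_pos.2 hz
  rw [mul_comm, ← le_div_iff₀ h0]
  refine ContinuousLinearMap.opNorm_le_bound _ (by positivity) fun x => ?_
  have h1 := hN z (resolvent N z x)
  have h2 : z • resolvent N z x - N (resolvent N z x) = x := by
    simpa [Algebra.algebraMap_eq_smul_one] using congrArg (fun S => S x) (sub_mul_resolvent h)
  rw [h2] at h1
  rw [div_mul_eq_mul_div, one_mul, le_div_iff₀ h0]
  linarith

theorem isResolventHermitian_of_le [CompleteSpace E] {N : E →L[ℂ] E}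
    (hN : ∀ (z : ℂ) (x : E), |z.im| * ‖x‖ ≤ ‖z • x - N x‖) : IsResolventHermitian N := by
  intro z hz
  suffices h : z ∈ resolventSet ℂ N from ⟨h, im_mul_norm_resolvent_le hN hz h⟩
  have h0 : 0 < |z.im| := abs_pos.2 hz
  set d : ℝ := ‖N‖ * ‖(1 : E →L[ℂ] E)‖ + 1 with hd
  have hd0 : 0 < d := by positivity
  obtain ⟨e, he, heq⟩ : ∃ e : ℝ, |e| = d ∧ |z.im + e| = |z.im| + d := by
    rcases le_total 0 z.im with h | h
    · exact ⟨d, abs_of_pos hd0, by rw [abs_of_nonneg h, abs_of_nonneg (by linarith)]⟩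
    · exact ⟨-d, by rw [abs_neg, abs_of_pos hd0],
        by rw [abs_of_nonpos h, abs_of_nonpos (by linarith)]; ring⟩
  set w : ℂ := z + e * I with hw
  have hwim : w.im = z.im + e := by simp [hw]
  have hwim0 : w.im ≠ 0 := by rw [← abs_pos, hwim, heq]; linarith
  have hwρ : w ∈ resolventSet ℂ N := by
    apply spectrum.mem_resolventSet_of_norm_lt_mul
    have := abs_im_le_norm w
    rw [hwim, heq] at this
    linarith
  have hR := im_mul_norm_resolvent_le hN hwim0 hwρ
  rw [hwim, heq] at hR
  have hlt : ‖(e * I : ℂ) • resolvent N w‖ < 1 := by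
    rw [norm_smul, norm_mul, norm_I, mul_one, norm_real, Real.norm_eq_abs, he]
    rcases (norm_nonneg (resolvent N w)).eq_or_lt with h | h
    · rw [← h]; simp
    · nlinarith
  have hu := isUnit_one_sub_of_norm_lt_one hlt
  have heq2 : algebraMap ℂ (E →L[ℂ] E) z - N =
      (algebraMap ℂ (E →L[ℂ] E) w - N) * (1 - (e * I : ℂ) • resolvent N w) := by
    rw [mul_sub, mul_one, mul_smul_comm, sub_mul_resolvent hwρ, hw, map_add,
      Algebra.algebraMap_eq_smul_one (e * I : ℂ)]
    abel
  rw [spectrum.mem_resolventSet_iff, heq2]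
  exact hwρ.mul hu

end NumericalRange

section SpectralSubspace

variable {E : Type*} [NormedAddCommGroup E] [NormedSpace ℂ E]

/-- Membership in the spectral subspace of `N` for `[l, ∞)`, expressed through the growth of the
iterates of `K - N`. -/
def InSpectralSubspace (N : E →L[ℂ] E) (l : ℝ) (x : E) : Prop :=
  ∃ K C : ℝ, l ≤ K ∧ ∀ n : ℕ, ‖((algebraMap ℂ (E →L[ℂ] E) K - N) ^ n) x‖ ≤ C * (K - l) ^ n

namespace InSpectralSubspace

variable {N : E →L[ℂ] E} {l : ℝ} {x : E}

theorem mono (h : InSpectralSubspace N l x) {l' : ℝ} (hl : l' ≤ l) :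
    InSpectralSubspace N l' x := by
  obtain ⟨K, C, hK, h⟩ := h
  have hC : 0 ≤ C := (norm_nonneg _).trans (by simpa using h 0)
  refine ⟨K, C, hl.trans hK, fun n => (h n).trans ?_⟩
  have : 0 ≤ K - l := by linarith
  gcongr

theorem eq_zero (h : InSpectralSubspace N l x) (hl : ‖N‖ < l) : x = 0 := by
  obtain ⟨K, C, hK, h⟩ := h
  have hlow : ∀ n : ℕ, (K - ‖N‖) ^ n * ‖x‖ ≤ ‖((algebraMap ℂ (E →L[ℂ] E) K - N) ^ n) x‖ := by
    intro n
    induction n with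
    | zero => simp
    | succ n ih =>
      rw [pow_succ', pow_succ']
      set v := ((algebraMap ℂ (E →L[ℂ] E) K - N) ^ n) x
      have h1 : (((algebraMap ℂ (E →L[ℂ] E) K - N) *
          (algebraMap ℂ (E →L[ℂ] E) K - N) ^ n) x) = (K : ℂ) • v - N v := by
        simp [Algebra.algebraMap_eq_smul_one, v]
      have hK0 : 0 ≤ K := (norm_nonneg N).trans (by linarith)
      have h2 : K * ‖v‖ - ‖N v‖ ≤ ‖(K : ℂ) • v - N v‖ := by
        have := norm_sub_norm_le ((K : ℂ) • v) (N v)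
        rwa [norm_smul, norm_real, Real.norm_of_nonneg hK0] at this
      rw [h1, mul_assoc]
      have h3 := N.le_opNorm v
      have h4 := mul_le_mul_of_nonneg_left ih (by linarith : 0 ≤ K - ‖N‖)
      linarith
  by_contra hx
  have hx0 : 0 < ‖x‖ := norm_pos_iff.2 hx
  have hp : 0 < K - ‖N‖ := by linarith
  set q := (K - l) / (K - ‖N‖)
  have hq0 : 0 ≤ q := div_nonneg (by linarith) hp.le
  have hq1 : q < 1 := by rw [div_lt_one hp]; linarith
  have hle : ∀ n : ℕ, ‖x‖ ≤ C * q ^ n := by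
    intro n
    have := (hlow n).trans (h n)
    rw [div_pow, mul_div_assoc', le_div_iff₀ (by positivity)]
    linarith
  have hlim : Tendsto (fun n : ℕ => C * q ^ n) atTop (𝓝 0) := by
    simpa using (tendsto_pow_atTop_nhds_zero_of_lt_one hq0 hq1).const_mul C
  exact hx0.not_ge (ge_of_tendsto' hlim hle)

/-- An operator intertwining `N + c` with another operator shifts spectral subspaces by `c`. -/
theorem of_intertwine {N' : E →L[ℂ] E} {c : ℝ} {S : E →L[ℂ] E} (h : InSpectralSubspace N l x)
    (hS : ∀ v, N' (S v) = S (N v) + (c : ℂ) • S v) : InSpectralSubspace N' (l + c) (S x) := by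
  obtain ⟨K, C, hK, h⟩ := h
  refine ⟨K + c, ‖S‖ * C, by linarith, fun n => ?_⟩
  have h1 : ((algebraMap ℂ (E →L[ℂ] E) (K + c : ℝ) - N') ^ n) (S x) =
      S (((algebraMap ℂ (E →L[ℂ] E) K - N) ^ n) x) := by
    induction n with
    | zero => simp
    | succ n ih =>
      rw [pow_succ', pow_succ', mul_apply_eq_comp, ih]
      simp [Algebra.algebraMap_eq_smul_one, hS, add_smul]
  rw [h1, mul_assoc, add_sub_add_right_eq_sub]
  exact (S.le_opNorm _).trans (mul_le_mul_of_nonneg_left (h n) (norm_nonneg _))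

theorem apply_self (h : InSpectralSubspace N l x) : InSpectralSubspace N l (N x) := by
  simpa using h.of_intertwine (N' := N) (S := N) (c := 0) (by simp)

end InSpectralSubspace

variable {A : Type*} [NormedRing A] [NormedAlgebra ℂ A]

theorem InSpectralSubspace.mul {D : A →L[ℂ] A} (hD : ∀ x y, D (x * y) = D x * y + x * D y)
    {l m : ℝ} {x y : A} (hx : InSpectralSubspace D l x) (hy : InSpectralSubspace D m y) :
    InSpectralSubspace D (l + m) (x * y) := by
  obtain ⟨K, C, hK, hx⟩ := hx
  obtain ⟨L, C', hL, hy⟩ := hy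
  have hC : 0 ≤ C := (norm_nonneg _).trans (by simpa using hx 0)
  have hp : 0 ≤ K - l := by linarith
  have hq : 0 ≤ L - m := by linarith
  set S := algebraMap ℂ (A →L[ℂ] A) K - D with hS
  set T := algebraMap ℂ (A →L[ℂ] A) L - D with hT
  set U := algebraMap ℂ (A →L[ℂ] A) ((K + L : ℝ)) - D with hU
  have hleib : ∀ v w, U (v * w) = S v * w + v * T w := by
    intro v w
    simp only [hU, hS, hT, Algebra.algebraMap_eq_smul_one, add_apply, sub_apply,
      smul_apply, one_apply_eq_self, hD, ofReal_add, add_smul,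
      sub_mul, mul_sub, smul_mul_assoc, mul_smul_comm]
    abel
  have key : ∀ n a b : ℕ, ‖(U ^ n) ((S ^ a) x * (T ^ b) y)‖ ≤
      C * C' * (K - l) ^ a * (L - m) ^ b * (K - l + (L - m)) ^ n := by
    intro n
    induction n with
    | zero =>
      intro a b
      simp only [pow_zero, one_apply_eq_self, mul_one]
      calc _ ≤ _ := norm_mul_le _ _
        _ ≤ (C * (K - l) ^ a) * (C' * (L - m) ^ b) :=
          mul_le_mul (hx a) (hy b) (norm_nonneg _) (by positivity)
        _ = _ := by ring
    | succ n ih =>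
      intro a b
      rw [pow_succ, mul_apply_eq_comp, hleib, map_add]
      have h1 := ih (a + 1) b
      have h2 := ih a (b + 1)
      rw [pow_succ' S, mul_apply_eq_comp] at h1
      rw [pow_succ' T, mul_apply_eq_comp] at h2
      calc _ ≤ _ := norm_add_le _ _
        _ ≤ _ := add_le_add h1 h2
        _ = _ := by ring
  refine ⟨K + L, C * C', by linarith, fun n => ?_⟩
  have := key n 0 0
  simp only [pow_zero, one_apply_eq_self, mul_one] at this
  rw [show K + L - (l + m) = K - l + (L - m) by ring]
  exact this

theorem InSpectralSubspace.one {D : A →L[ℂ] A} (hD : D 1 = 0) : InSpectralSubspace D 0 1 := by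
  refine ⟨0, ‖(1 : A)‖, le_rfl, fun n => ?_⟩
  rcases n with _ | n
  · simp
  · have h : (algebraMap ℂ (A →L[ℂ] A) ((0 : ℝ) : ℂ) - D) 1 = 0 := by simp [hD]
    rw [pow_succ, mul_apply_eq_comp, h, map_zero]
    simp

end SpectralSubspace

section DecreasingIdempotents

variable {R : Type*} [Ring R] {Q : ℕ → R}

theorem mul_sub_succ_of_decreasing (hQ : ∀ i j, i ≤ j → Q i * Q j = Q j ∧ Q j * Q i = Q j)
    (i j : ℕ) : Q j * (Q i - Q (i + 1)) = if j ≤ i then Q i - Q (i + 1) else 0 := by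
  rw [mul_sub]
  split_ifs with h
  · rw [(hQ j i h).1, (hQ j (i + 1) (by omega)).1]
  · rw [(hQ i j (by omega)).2, (hQ (i + 1) j (by omega)).2, sub_self]

theorem sum_mul_sub_succ_of_decreasing
    (hQ : ∀ i j, i ≤ j → Q i * Q j = Q j ∧ Q j * Q i = Q j) {m i : ℕ} (hi : i ≤ m) :
    (∑ j ∈ Finset.range m, Q (j + 1)) * (Q i - Q (i + 1)) = i • (Q i - Q (i + 1)) := by
  rw [Finset.sum_mul]
  simp only [mul_sub_succ_of_decreasing hQ]
  rw [← Finset.sum_filter, Finset.sum_const]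
  have : Finset.filter (fun j => j + 1 ≤ i) (Finset.range m) = Finset.range i := by
    ext j; simp; omega
  rw [this, Finset.card_range]

end DecreasingIdempotents

section SkewDerivation

variable {A : Type*} [NormedRing A] [NormedAlgebra ℂ A]

/-- The inner derivation `x ↦ h * x - x * h`. -/
noncomputable def adCLM (h : A) : A →L[ℂ] A :=
  ContinuousLinearMap.mul ℂ A h - (ContinuousLinearMap.mul ℂ A).flip h

@[simp]
theorem adCLM_apply (h x : A) : adCLM h x = h * x - x * h := by simp [adCLM]

variable [StarRing A]

/-- A derivation `D` anticommuting with the involution, such as `x ↦ h * x - x * h` for a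
self-adjoint `h`. -/
structure IsSkewDerivation (D : A → A) : Prop where
  leibniz : ∀ x y, D (x * y) = D x * y + x * D y
  map_star : ∀ x, D (star x) = -star (D x)

variable (A) in
/-- Every subset of `A` has a left support projection. -/
def HasLeftSupports : Prop :=
  ∀ V : Set A, ∃ Q : A, IsStarProjection Q ∧ (∀ y ∈ V, Q * y = y) ∧
    ∀ x, (∀ y ∈ V, x * y = 0) → x * Q = 0

theorem spectralSupport_mul_of_le {D : A →L[ℂ] A} {Q : ℕ → A} {κ : ℝ} (hκ : 0 ≤ κ)
    (hQ : ∀ j, IsStarProjection (Q j))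
    (hQy : ∀ (j : ℕ) y, InSpectralSubspace D (j * κ) y → Q j * y = y)
    (hQx : ∀ (j : ℕ) x, (∀ y, InSpectralSubspace D (j * κ) y → x * y = 0) → x * Q j = 0)
    {i j : ℕ} (hij : i ≤ j) : Q i * Q j = Q j ∧ Q j * Q i = Q j := by
  have h1 : Q i * Q j = Q j := by
    have h2 := hQx j (1 - Q i) fun y hy => by
      rw [sub_mul, one_mul, hQy i y (hy.mono (by gcongr)), sub_self]
    rw [sub_mul, one_mul, sub_eq_zero] at h2
    exact h2.symm
  refine ⟨h1, ?_⟩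
  have h3 := congrArg star h1
  rwa [star_mul, (hQ i).isSelfAdjoint.star_eq, (hQ j).isSelfAdjoint.star_eq] at h3

namespace IsSkewDerivation

variable {D : A →L[ℂ] A}

theorem map_one (hD : IsSkewDerivation D) : D 1 = 0 := by
  simpa using hD.leibniz 1 1

theorem sub_adCLM (hD : IsSkewDerivation D) {h : A} (hh : IsSelfAdjoint h) :
    IsSkewDerivation (D - adCLM h) where
  leibniz x y := by
    simp only [sub_apply, adCLM_apply, hD.leibniz, sub_mul, mul_sub, mul_assoc]
    abel
  map_star x := by
    simp only [sub_apply, adCLM_apply, hD.map_star, star_sub, star_mul, hh.star_eq]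
    abel

theorem inSpectralSubspace_star [StarModule ℂ A] [NormedStarGroup A] (hD : IsSkewDerivation D)
    {l : ℝ} {x : A} (h : InSpectralSubspace (-D) l x) : InSpectralSubspace D l (star x) := by
  obtain ⟨K, C, hK, h⟩ := h
  refine ⟨K, C, hK, fun n => ?_⟩
  have h1 : ((algebraMap ℂ (A →L[ℂ] A) K - D) ^ n) (star x) =
      star (((algebraMap ℂ (A →L[ℂ] A) K - -D) ^ n) x) := by
    induction n with
    | zero => simp
    | succ n ih =>
      rw [pow_succ', pow_succ', mul_apply_eq_comp, ih]
      simp [Algebra.algebraMap_eq_smul_one, hD.map_star, star_smul]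
  rw [h1, norm_star]
  exact h n

/-- The support projection of a spectral subspace is annihilated by the derivation. -/
theorem apply_support_eq_zero (hD : IsSkewDerivation D) {l : ℝ} {Q : A} (hQ : IsStarProjection Q)
    (hQy : ∀ y, InSpectralSubspace D l y → Q * y = y)
    (hQx : ∀ x, (∀ y, InSpectralSubspace D l y → x * y = 0) → x * Q = 0) : D Q = 0 := by
  have h1 : D Q * Q = 0 := hQx _ fun y hy => by
    have h2 := hD.leibniz Q y
    rw [hQy y hy, hQy _ hy.apply_self] at h2
    simpa using h2
  have h3 : Q * D Q = 0 := by
    have h4 := hD.map_star Q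
    have h5 := congrArg star h1
    rw [hQ.isSelfAdjoint.star_eq] at h4
    rw [star_mul, star_zero, hQ.isSelfAdjoint.star_eq, ← neg_eq_zero, ← mul_neg, ← h4] at h5
    exact h5
  have h6 := hD.leibniz Q Q
  rwa [hQ.isIdempotentElem.eq, h1, h3, add_zero] at h6

end IsSkewDerivation

end SkewDerivation

section Approximation

variable {A : Type*} [NormedRing A] [StarRing A] [CStarRing A]

theorem IsStarProjection.norm_le_one {Q : A} (hQ : IsStarProjection Q) : ‖Q‖ ≤ 1 := by
  have h := CStarRing.norm_star_mul_self (x := Q)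
  rw [hQ.isSelfAdjoint.star_eq, hQ.isIdempotentElem.eq] at h
  nlinarith [norm_nonneg Q]

variable [NormedAlgebra ℂ A] [StarModule ℂ A]

/-- Subtracting a suitable inner derivation concentrates the spectrum near the origin: the new
derivation has no spectral subspace beyond `κ`. -/
theorem IsSkewDerivation.exists_eq_zero_of_inSpectralSubspace (hA : HasLeftSupports A)
    {D : A →L[ℂ] A} (hD : IsSkewDerivation D) {κ : ℝ} (hκ : 0 < κ) {m : ℕ} (hm : m * κ = ‖D‖) :
    ∃ h : A, IsSelfAdjoint h ∧ ‖h‖ ≤ ‖D‖ ∧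
      ∀ l x, κ < l → InSpectralSubspace (D - adCLM h) l x → x = 0 := by
  choose Q hQ hQy hQx using fun j : ℕ => hA {y | InSpectralSubspace D (j * κ) y}
  simp only [Set.mem_ofPred_eq] at hQy hQx
  have hmul : ∀ i j, i ≤ j → Q i * Q j = Q j ∧ Q j * Q i = Q j := fun i j =>
    spectralSupport_mul_of_le hκ.le hQ hQy hQx
  have hQ0 : Q 0 = 1 := by
    simpa using hQy 0 1 (by simpa using InSpectralSubspace.one hD.map_one)
  have hQm : Q (m + 1) = 0 := by
    have := hQx (m + 1) 1 fun y hy => by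
      rw [one_mul]
      exact hy.eq_zero (by push_cast; linarith)
    rwa [one_mul] at this
  have hDQ : ∀ j, D (Q j) = 0 := fun j => hD.apply_support_eq_zero (hQ j) (hQy j) (hQx j)
  set P : ℕ → A := fun i => Q i - Q (i + 1) with hP
  have hDP : ∀ i, D (P i) = 0 := fun i => by simp [hP, hDQ]
  have hPstar : ∀ i, star (P i) = P i := fun i => by
    simp [hP, (hQ i).isSelfAdjoint.star_eq, (hQ (i + 1)).isSelfAdjoint.star_eq]
  have hPsum : ∑ i ∈ Finset.range (m + 1), P i = 1 := by
    rw [Finset.sum_range_sub', hQ0, hQm, sub_zero]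
  have hPQ : ∀ j, P j * Q j = P j := fun j => by
    have := congrArg star ((mul_sub_succ_of_decreasing hmul j j).trans (if_pos le_rfl))
    rwa [star_mul, (hQ j).isSelfAdjoint.star_eq, hPstar] at this
  have hQP : ∀ i, Q (i + 1) * P i = 0 := fun i =>
    (mul_sub_succ_of_decreasing hmul i (i + 1)).trans (if_neg (by omega))
  set h : A := (κ : ℂ) • ∑ j ∈ Finset.range m, Q (j + 1) with hh
  have hsa : IsSelfAdjoint h := by
    simp [IsSelfAdjoint, hh, star_smul, star_sum, (hQ _).isSelfAdjoint.star_eq]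
  have hhP : ∀ i ≤ m, h * P i = ((i * κ : ℝ) : ℂ) • P i := fun i hi => by
    rw [hh, smul_mul_assoc, hP, sum_mul_sub_succ_of_decreasing hmul hi, ← Nat.cast_smul_eq_nsmul ℂ,
      smul_smul]
    push_cast; ring_nf
  have hPh : ∀ i ≤ m, P i * h = ((i * κ : ℝ) : ℂ) • P i := fun i hi => by
    have := congrArg star (hhP i hi)
    simpa [star_mul, star_smul, hPstar, hsa.star_eq, mul_comm] using this
  refine ⟨h, hsa, ?_, fun l x hl hx => ?_⟩
  · rw [hh, norm_smul, norm_real, Real.norm_of_nonneg hκ.le, ← hm, mul_comm]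
    gcongr
    refine (norm_sum_le _ _).trans ?_
    refine (Finset.sum_le_sum fun j _ => (hQ (j + 1)).norm_le_one).trans ?_
    simp
  · have hcorner : ∀ i ≤ m, ∀ j ≤ m, P i * x * P j = 0 := by
      intro i hi j hj
      set S : A →L[ℂ] A :=
        ((ContinuousLinearMap.mul ℂ A).flip (P j)).comp (ContinuousLinearMap.mul ℂ A (P i)) with hS
      have hSv : ∀ v, S v = P i * v * P j := fun v => by simp [hS]
      have hy := hx.of_intertwine (N' := D) (S := S) (c := i * κ - j * κ) fun v => by
        have h1 : P i * h * v * P j = ((i * κ : ℝ) : ℂ) • (P i * v * P j) := by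
          rw [hPh i hi, smul_mul_assoc, smul_mul_assoc]
        have h2 : P i * v * h * P j = ((j * κ : ℝ) : ℂ) • (P i * v * P j) := by
          rw [mul_assoc _ h, hhP j hj, mul_smul_comm]
        simp only [hSv, hD.leibniz, hDP, zero_mul, mul_zero, add_zero, zero_add, sub_apply,
          adCLM_apply, mul_sub, sub_mul, ← mul_assoc, h1, h2, ofReal_sub, sub_smul]
        abel
      rw [hSv] at hy
      set y := P i * x * P j with hydef
      have hyQ : y * Q j = 0 := hQx j y fun z hz => by
        have h1 := hQy (i + 1) (y * z) ((hy.mul hD.leibniz hz).mono (by push_cast; linarith))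
        rw [← h1, hydef, ← mul_assoc, ← mul_assoc, ← mul_assoc, hQP]
        simp
      rwa [hydef, mul_assoc, hPQ] at hyQ
    calc x = (∑ i ∈ Finset.range (m + 1), P i) * x * ∑ j ∈ Finset.range (m + 1), P j := by
          rw [hPsum, one_mul, mul_one]
      _ = 0 := by
        simp only [Finset.sum_mul, Finset.mul_sum]
        refine Finset.sum_eq_zero fun j hj => Finset.sum_eq_zero fun i hi => ?_
        have := Finset.mem_range.1 hi
        have := Finset.mem_range.1 hj
        exact hcorner _ (by omega) _ (by omega)

variable [CompleteSpace A]

theorem norm_le_of_inSpectralSubspace {E : Type*} [NormedAddCommGroup E] [NormedSpace ℂ E]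
    [CompleteSpace E] {N : E →L[ℂ] E}
    (hN : ∀ (z : ℂ) (x : E), |z.im| * ‖x‖ ≤ ‖z • x - N x‖) {κ : ℝ} (hκ : 0 ≤ κ)
    (hpos : ∀ l x, κ < l → InSpectralSubspace N l x → x = 0)
    (hneg : ∀ l x, κ < l → InSpectralSubspace (-N) l x → x = 0) : ‖N‖ ≤ 5 * κ := by
  have hres : ∀ {T : E →L[ℂ] E}, (∀ (z : ℂ) (x : E), |z.im| * ‖x‖ ≤ ‖z • x - T x‖) →
      (∀ l x, κ < l → InSpectralSubspace T l x → x = 0) →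
      ∀ s : ℝ, κ < s → (s : ℂ) ∈ resolventSet ℂ T := by
    intro T hT h s hs
    refine (isResolventHermitian_of_le hT).mem_resolventSet_of_lt (fun l hl F hF => ?_) hs
    obtain ⟨K, C, hK, hF⟩ := hF
    ext x
    refine h l _ hl ⟨K, C * ‖x‖, hK, fun n => ?_⟩
    calc ‖((algebraMap ℂ (E →L[ℂ] E) K - T) ^ n) (F x)‖
        = ‖((algebraMap ℂ (E →L[ℂ] E) K - T) ^ n * F) x‖ := rfl
      _ ≤ ‖(algebraMap ℂ (E →L[ℂ] E) K - T) ^ n * F‖ * ‖x‖ := ContinuousLinearMap.le_opNorm _ _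
      _ ≤ C * (K - l) ^ n * ‖x‖ := by gcongr; exact hF n
      _ = C * ‖x‖ * (K - l) ^ n := by ring
  have hN' : ∀ (z : ℂ) (x : E), |z.im| * ‖x‖ ≤ ‖z • x - (-N) x‖ := fun z x => by
    have := hN (-z) x
    rw [← norm_neg (-z • x - N x)] at this
    simpa [add_comm, sub_eq_add_neg] using this
  have hH := isResolventHermitian_of_le hN
  have hp : ∀ p, κ < p → ‖N‖ ≤ 5 * p := fun p hp => by
    refine hH.norm_le_of_resolventSet ContinuousLinearMap.norm_id_le (hκ.trans_lt hp) fun z hz => ?_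
    by_cases him : z.im = 0
    · obtain ⟨s, rfl⟩ : ∃ s : ℝ, z = s := ⟨z.re, by apply Complex.ext <;> simp [him]⟩
      rw [norm_real, Real.norm_eq_abs] at hz
      rcases le_total 0 s with hs | hs
      · rw [abs_of_nonneg hs] at hz
        exact hres hN hpos s (by linarith)
      · rw [abs_of_nonpos hs] at hz
        have h1 := hres hN' hneg (-s) (by linarith)
        rw [spectrum.mem_resolventSet_iff] at h1 ⊢
        rw [← IsUnit.neg_iff]
        convert h1 using 1
        rw [ofReal_neg, map_neg]
        abel
    · exact (hH z him).1
  have h5 : ‖N‖ / 5 ≤ κ := le_of_forall_gt_imp_ge_of_dense fun p h => by linarith [hp p h]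
  linarith

theorem IsSkewDerivation.exists_norm_sub_adCLM_le (hA : HasLeftSupports A)
    (hb : ∀ D : A →L[ℂ] A, IsSkewDerivation D →
      ∀ (z : ℂ) (x : A), |z.im| * ‖x‖ ≤ ‖z • x - D x‖)
    {D : A →L[ℂ] A} (hD : IsSkewDerivation D) :
    ∃ h : A, IsSelfAdjoint h ∧ ‖h‖ ≤ ‖D‖ ∧ ‖D - adCLM h‖ ≤ ‖D‖ / 2 := by
  rcases (norm_nonneg D).eq_or_lt with h0 | h0
  · refine ⟨0, IsSelfAdjoint.zero A, by simp, ?_⟩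
    have : adCLM (0 : A) = 0 := by ext; simp
    simp [this, ← h0]
  obtain ⟨h, hsa, hle, hz⟩ := hD.exists_eq_zero_of_inSpectralSubspace hA
    (κ := ‖D‖ / 10) (by positivity) (m := 10) (by push_cast; ring)
  refine ⟨h, hsa, hle, ?_⟩
  have hN := hD.sub_adCLM hsa
  refine (norm_le_of_inSpectralSubspace (hb _ hN) (by positivity) hz fun l x hl hx => ?_).trans
    (le_of_eq (by ring))
  exact star_eq_zero.1 (hz l _ hl (hN.inSpectralSubspace_star hx))

/-- Iterating the approximation by inner derivations exhibits a skew derivation as inner. -/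
theorem IsSkewDerivation.exists_eq_adCLM (hA : HasLeftSupports A)
    (hb : ∀ D : A →L[ℂ] A, IsSkewDerivation D →
      ∀ (z : ℂ) (x : A), |z.im| * ‖x‖ ≤ ‖z • x - D x‖)
    {D : A →L[ℂ] A} (hD : IsSkewDerivation D) : ∃ h : A, D = adCLM h := by
  choose! f hf using fun (D : A →L[ℂ] A) (hD : IsSkewDerivation D) =>
    hD.exists_norm_sub_adCLM_le hA hb
  let u : ℕ → (A →L[ℂ] A) := fun n => (fun T => T - adCLM (f T))^[n] D
  have hu : ∀ n, u (n + 1) = u n - adCLM (f (u n)) := fun n =>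
    Function.iterate_succ_apply' _ _ _
  have hskew : ∀ n, IsSkewDerivation (u n) := fun n => by
    induction n with
    | zero => exact hD
    | succ n ih => rw [hu]; exact ih.sub_adCLM (hf _ ih).1
  have hnorm : ∀ n, ‖u n‖ ≤ ‖D‖ * (1 / 2) ^ n := fun n => by
    induction n with
    | zero => simp [u]
    | succ n ih =>
      rw [hu, pow_succ]
      have := (hf _ (hskew n)).2.2
      linarith
  have hgeom : Summable fun n : ℕ => ‖D‖ * (1 / 2 : ℝ) ^ n := summable_geometric_two.mul_left _
  have hsum : Summable fun n => f (u n) :=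
    Summable.of_norm_bounded hgeom fun n => (hf _ (hskew n)).2.1.trans (hnorm n)
  refine ⟨∑' n, f (u n), ?_⟩
  have hpart : ∀ n, u n = D - adCLM (∑ k ∈ Finset.range n, f (u k)) := fun n => by
    induction n with
    | zero => ext; simp [u]
    | succ n ih =>
      rw [hu]
      nth_rewrite 1 [ih]
      ext x
      simp only [Finset.sum_range_succ, sub_apply, adCLM_apply, add_mul, mul_add]
      abel
  have hlim := hsum.hasSum.tendsto_sum_nat
  ext x
  have h1 : Tendsto (fun n => u n x) atTop (𝓝 0) := by
    have h2 : Tendsto u atTop (𝓝 0) :=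
      squeeze_zero_norm hnorm hgeom.tendsto_atTop_zero
    have h4 := ((ContinuousLinearMap.apply ℂ A x).continuous.tendsto 0).comp h2
    rwa [map_zero] at h4
  have h3 : Tendsto (fun n => u n x) atTop (𝓝 (D x - adCLM (∑' n, f (u n)) x)) := by
    have h5 : ∀ n, u n x = D x - ((∑ k ∈ Finset.range n, f (u k)) * x -
        x * ∑ k ∈ Finset.range n, f (u k)) := fun n => by
      rw [hpart n, sub_apply, adCLM_apply]
    rw [adCLM_apply, funext h5]
    exact ((hlim.mul_const x).sub (hlim.const_mul x)).const_sub (D x)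
  exact sub_eq_zero.1 (tendsto_nhds_unique h3 h1)

end Approximation

section Inner

theorem continuous_of_im_mul_norm_le {E : Type*} [NormedAddCommGroup E] [NormedSpace ℂ E]
    [CompleteSpace E] {D : E →ₗ[ℂ] E}
    (hD : ∀ (z : ℂ) (x : E), |z.im| * ‖x‖ ≤ ‖z • x - D x‖) : Continuous D := by
  refine D.continuous_of_seq_closed_graph fun u x y hu hy => ?_
  set w := y - D x with hw
  have hv : Tendsto (fun n => u n - x) atTop (𝓝 0) := by
    simpa using hu.sub_const x
  have hDv : Tendsto (fun n => D (u n - x)) atTop (𝓝 w) := by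
    simpa [hw] using hy.sub_const (D x)
  have hle : ∀ s : ℝ, 0 < s → s * ‖w‖ ≤ ‖D w‖ := by
    intro s hs
    set z : ℂ := s * I with hz
    have hzim : |z.im| = s := by simp [hz, abs_of_pos hs]
    have h1 : Tendsto (fun n => |z.im| * ‖w + z • (u n - x)‖) atTop (𝓝 (|z.im| * ‖w‖)) := by
      simpa using ((hv.const_smul z).const_add w).norm.const_mul |z.im|
    have h2 : Tendsto (fun n => ‖z • (w + z • (u n - x)) - D (w + z • (u n - x))‖) atTop
        (𝓝 ‖D w‖) := by
      have h3 := ((((hv.const_smul z).const_add w).const_smul z).sub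
        ((hDv.const_smul z).const_add (D w))).norm
      have h4 : ‖z • (w + z • (0 : E)) - (D w + z • w)‖ = ‖D w‖ := by
        rw [smul_zero, add_zero, ← norm_neg]
        congr 1
        abel
      rw [h4] at h3
      simpa only [map_add, map_smul] using h3
    rw [← hzim]
    exact le_of_tendsto_of_tendsto' h1 h2 fun n => hD z _
  have hw0 : w = 0 := by
    by_contra h
    have hpos : 0 < ‖w‖ := norm_pos_iff.2 h
    have := hle ((‖D w‖ + 1) / ‖w‖) (by positivity)
    rw [div_mul_cancel₀ _ hpos.ne'] at this
    linarith
  exact sub_eq_zero.1 hw0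

variable {A : Type*} [NormedRing A] [StarRing A] [NormedAlgebra ℂ A]

/-- The map `x ↦ (D x*)*`. -/
noncomputable def starConjugate [StarModule ℂ A] (D : A →ₗ[ℂ] A) : A →ₗ[ℂ] A where
  toFun x := star (D (star x))
  map_add' x y := by simp
  map_smul' c x := by simp [star_smul]

theorem exists_eq_mul_sub_mul_of_derivation [CStarRing A] [StarModule ℂ A] [CompleteSpace A]
    (hA : HasLeftSupports A)
    (hb : ∀ D : A →ₗ[ℂ] A, IsSkewDerivation D →
      ∀ (z : ℂ) (x : A), |z.im| * ‖x‖ ≤ ‖z • x - D x‖)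
    (D : A →ₗ[ℂ] A) (hD : ∀ x y, D (x * y) = D x * y + x * D y) :
    ∃ a : A, ∀ x, D x = a * x - x * a := by
  have hinner : ∀ T : A →ₗ[ℂ] A, IsSkewDerivation T → ∃ h : A, ∀ x, T x = h * x - x * h := by
    intro T hT
    obtain ⟨h, hh⟩ := IsSkewDerivation.exists_eq_adCLM hA (fun S hS => hb S.toLinearMap hS)
      (D := ⟨T, continuous_of_im_mul_norm_le (hb T hT)⟩) hT
    exact ⟨h, fun x => (congrArg (fun S : A →L[ℂ] A => S x) hh).trans (adCLM_apply h x)⟩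
  have hσ : ∀ x, starConjugate D x = star (D (star x)) := fun _ => rfl
  have hσmul : ∀ x y, starConjugate D (x * y) = starConjugate D x * y + x * starConjugate D y :=
    fun x y => by simp [hσ, hD, add_comm]
  obtain ⟨a, ha⟩ := hinner ((1 / 2 : ℂ) • (D - starConjugate D))
    { leibniz := fun x y => by
        simp only [LinearMap.smul_apply, LinearMap.sub_apply, hD, hσmul, smul_mul_assoc,
          mul_smul_comm, ← smul_add, sub_mul, mul_sub]
        congr 1
        abel
      map_star := fun x => by
        simp [hσ, star_smul, ← smul_neg] }
  obtain ⟨b, hbx⟩ := hinner ((-I / 2 : ℂ) • (D + starConjugate D))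
    { leibniz := fun x y => by
        simp only [LinearMap.smul_apply, LinearMap.add_apply, hD, hσmul, smul_mul_assoc,
          mul_smul_comm, ← smul_add, add_mul, mul_add]
        congr 1
        abel
      map_star := fun x => by
        simp [hσ, star_smul, ← neg_smul, neg_div, add_comm] }
  refine ⟨a + I • b, fun x => ?_⟩
  have h1 : D x = (1 / 2 : ℂ) • (D - starConjugate D) x +
      I • (-I / 2 : ℂ) • (D + starConjugate D) x := by
    have hI : I * (-I / 2) = 1 / 2 := by linear_combination (-1 / 2 : ℂ) * I_mul_I
    rw [smul_smul, hI, ← smul_add, LinearMap.sub_apply, LinearMap.add_apply, sub_add_add_cancel,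
      ← two_smul ℂ, smul_smul]
    norm_num
  rw [h1]
  simp only [LinearMap.smul_apply] at ha hbx
  rw [ha x, hbx x, add_mul, mul_add, smul_sub, smul_mul_assoc, mul_smul_comm]
  abel

end Inner

namespace VonNeumannAlgebra

variable {H : Type*} [NormedAddCommGroup H] [InnerProductSpace ℂ H] [CompleteSpace H]

theorem mem_of_commute (M : VonNeumannAlgebra H) {T : H →L[ℂ] H}
    (hT : ∀ c ∈ M.commutant, Commute c T) : T ∈ M := by
  rw [← M.commutant_commutant, mem_commutant_iff]
  exact fun c hc => (hT c hc).eq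

theorem isClosed (M : VonNeumannAlgebra H) : IsClosed (M : Set (H →L[ℂ] H)) := by
  rw [← M.centralizer_centralizer]
  exact Set.isClosed_centralizer _

instance (M : VonNeumannAlgebra H) : CompleteSpace M.toStarSubalgebra :=
  M.isClosed.completeSpace_coe

theorem hasLeftSupports (M : VonNeumannAlgebra H) : HasLeftSupports M.toStarSubalgebra := by
  intro V
  set W : Submodule ℂ H :=
    Submodule.span ℂ {v | ∃ y ∈ V, ∃ ξ, (y : H →L[ℂ] H) ξ = v} with hW
  set U := W.topologicalClosure with hU
  have hUc : IsClosed (U : Set H) := W.isClosed_topologicalClosure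
  have : CompleteSpace U := hUc.completeSpace_coe
  have hmem : ∀ y ∈ V, ∀ ξ, (y : H →L[ℂ] H) ξ ∈ U := fun y hy ξ =>
    W.le_topologicalClosure (Submodule.subset_span ⟨y, hy, ξ, rfl⟩)
  have hmin : ∀ (T : H →L[ℂ] H) (U' : Submodule ℂ H), IsClosed (U' : Set H) →
      (∀ y ∈ V, ∀ ξ, T ((y : H →L[ℂ] H) ξ) ∈ U') → ∀ v ∈ U, T v ∈ U' := by
    intro T U' hU' h v hv
    have h1 : U ≤ U'.comap T.toLinearMap := by
      refine W.topologicalClosure_minimal (Submodule.span_le.2 ?_) (hU'.preimage T.continuous)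
      rintro _ ⟨y, hy, ξ, rfl⟩
      exact h y hy ξ
    exact h1 hv
  have hproj : IsStarProjection U.starProjection := isStarProjection_starProjection
  have hQM : U.starProjection ∈ M := by
    rw [IsStarProjection.mem_iff hproj]
    intro c hc
    rw [Submodule.range_starProjection, Module.End.mem_invtSubmodule]
    intro v hv
    refine hmin c U hUc (fun y hy ξ => ?_) v hv
    have h1 := mem_commutant_iff.1 hc y y.2
    have h2 : c ((y : H →L[ℂ] H) ξ) = (y : H →L[ℂ] H) (c ξ) :=
      (congrArg (fun S : H →L[ℂ] H => S ξ) h1).symm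
    rw [h2]
    exact hmem y hy _
  refine ⟨⟨U.starProjection, hQM⟩, ⟨?_, ?_⟩, fun y hy => ?_, fun x hx => ?_⟩
  · exact Subtype.ext hproj.isIdempotentElem.eq
  · exact Subtype.ext hproj.isSelfAdjoint.star_eq
  · refine Subtype.ext (ContinuousLinearMap.ext fun ξ => ?_)
    exact U.starProjection_eq_self_iff.2 (hmem y hy ξ)
  · refine Subtype.ext (ContinuousLinearMap.ext fun ξ => ?_)
    have h1 := hmin x ⊥ isClosed_singleton (fun y hy ζ => ?_) _ (U.starProjection_apply_mem ξ)
    · exact (Submodule.mem_bot ℂ).1 h1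
    · exact (Submodule.mem_bot ℂ).2
        (congrArg (fun S : M.toStarSubalgebra => (S : H →L[ℂ] H) ζ) (hx y hy))

theorem exists_sqrt_norm_sq_sub_star_mul_self (M : VonNeumannAlgebra H) (x : M.toStarSubalgebra) :
    ∃ y : M.toStarSubalgebra, star y = y ∧ y * y = ((‖x‖ ^ 2 : ℝ) : ℂ) • 1 - star x * x := by
  set X := (x : H →L[ℂ] H)
  set T : H →L[ℂ] H := algebraMap ℝ (H →L[ℂ] H) (‖X‖ ^ 2) - star X * X with hT
  have hT0 : 0 ≤ T := sub_nonneg.2 CStarAlgebra.star_mul_le_algebraMap_norm_sq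
  have hmem : CFC.sqrt T ∈ M := M.mem_of_commute fun c hc => by
    have h1 : ∀ S ∈ M, Commute S c := mem_commutant_iff.1 hc
    have hTc : Commute T c := (Algebra.commute_algebraMap_left _ _).sub_left
      ((h1 _ (star_mem x.2)).mul_left (h1 _ x.2))
    exact (hTc.cfcₙ_nnreal _).symm
  refine ⟨⟨CFC.sqrt T, hmem⟩, Subtype.ext ?_, Subtype.ext ?_⟩
  · exact (CFC.sqrt_nonneg T).isSelfAdjoint.star_eq
  · refine (CFC.sqrt_mul_sqrt_self T hT0).trans ?_
    rw [hT, Algebra.algebraMap_eq_smul_one, ← Complex.coe_smul]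
    rfl

theorem im_inner_apply_le {M : VonNeumannAlgebra H}
    {D : M.toStarSubalgebra →ₗ[ℂ] M.toStarSubalgebra} (hD : IsSkewDerivation D)
    {x y : M.toStarSubalgebra} {c : ℂ} (hy : star y = y) (hyx : y * y = c • 1 - star x * x)
    (ξ : H) : |(inner ℂ ((x : H →L[ℂ] H) ξ) ((D x : H →L[ℂ] H) ξ)).im| ≤
      ‖ξ‖ * (‖D y‖ * ‖(y : H →L[ℂ] H) ξ‖) := by
  have hD1 : D 1 = 0 := by simpa using hD.leibniz 1 1
  have h1 : D y * y + y * D y = star (D x) * x - star x * D x := by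
    rw [← hD.leibniz, hyx, map_sub, map_smul, hD1, hD.leibniz, hD.map_star]
    simp
    abel
  set X := (x : H →L[ℂ] H)
  set X' := (D x : H →L[ℂ] H)
  set Y := (y : H →L[ℂ] H)
  set Y' := (D y : H →L[ℂ] H)
  have h2 : Y' * Y + Y * Y' = star X' * X - star X * X' := congrArg Subtype.val h1
  have hYs : star Y = Y := congrArg Subtype.val hy
  have h3 := congrArg (fun S : H →L[ℂ] H => inner ℂ ξ (S ξ)) h2
  have hstar : ∀ (S : H →L[ℂ] H) (v : H), inner ℂ ξ (star S v) = inner ℂ (S ξ) v := fun S v => by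
    rw [ContinuousLinearMap.star_eq_adjoint, ContinuousLinearMap.adjoint_inner_right]
  have h4 : inner ℂ ξ (Y' (Y ξ)) + inner ℂ (Y ξ) (Y' ξ) =
      inner ℂ (X' ξ) (X ξ) - inner ℂ (X ξ) (X' ξ) := by
    have h5 := hstar Y (Y' ξ)
    rw [hYs] at h5
    simpa [inner_add_right, inner_sub_right, hstar, h5] using h3
  have h5 : ‖inner ℂ (X' ξ) (X ξ) - inner ℂ (X ξ) (X' ξ)‖ = 2 * |(inner ℂ (X ξ) (X' ξ)).im| := by
    rw [← inner_conj_symm, norm_sub_rev, Complex.sub_conj]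
    simp
  have h6 : ‖inner ℂ ξ (Y' (Y ξ))‖ ≤ ‖ξ‖ * (‖Y'‖ * ‖Y ξ‖) :=
    (norm_inner_le_norm _ _).trans (by gcongr; exact Y'.le_opNorm _)
  have h7 : ‖inner ℂ (Y ξ) (Y' ξ)‖ ≤ ‖Y ξ‖ * (‖Y'‖ * ‖ξ‖) :=
    (norm_inner_le_norm _ _).trans (by gcongr; exact Y'.le_opNorm _)
  have h8 := norm_add_le (inner ℂ ξ (Y' (Y ξ))) (inner ℂ (Y ξ) (Y' ξ))
  rw [h4, h5] at h8
  have h9 : ‖D y‖ = ‖Y'‖ := rfl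
  rw [h9]
  nlinarith

theorem im_mul_norm_le {M : VonNeumannAlgebra H}
    {D : M.toStarSubalgebra →ₗ[ℂ] M.toStarSubalgebra} (hD : IsSkewDerivation D)
    (z : ℂ) (x : M.toStarSubalgebra) : |z.im| * ‖x‖ ≤ ‖z • x - D x‖ := by
  rcases (norm_nonneg x).eq_or_lt with h0 | h0
  · rw [← h0, mul_zero]
    exact norm_nonneg _
  obtain ⟨y, hy, hyx⟩ := M.exists_sqrt_norm_sq_sub_star_mul_self x
  have hYξ : ∀ ξ, ‖(y : H →L[ℂ] H) ξ‖ ^ 2 = ‖x‖ ^ 2 * ‖ξ‖ ^ 2 - ‖(x : H →L[ℂ] H) ξ‖ ^ 2 := by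
    intro ξ
    have hyy : star (y : H →L[ℂ] H) * (y : H →L[ℂ] H) =
        ((‖x‖ ^ 2 : ℝ) : ℂ) • 1 - star (x : H →L[ℂ] H) * (x : H →L[ℂ] H) := by
      have h1 : star (y : H →L[ℂ] H) = y := congrArg Subtype.val hy
      rw [h1]
      exact congrArg Subtype.val hyx
    have h2 := congrArg (fun S : H →L[ℂ] H => inner ℂ ξ (S ξ)) hyy
    simp only [mul_apply_eq_comp, sub_apply, smul_apply, one_apply_eq_self, inner_sub_right,
      inner_smul_right, ContinuousLinearMap.star_eq_adjoint,
      ContinuousLinearMap.adjoint_inner_right, inner_self_eq_norm_sq_to_K] at h2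
    apply ofReal_injective
    push_cast at h2 ⊢
    exact h2
  have hbound : ∀ r : ℝ, 0 < r → r < ‖x‖ →
      |z.im| * r ^ 2 ≤ ‖x‖ * ‖z • x - D x‖ + ‖D y‖ * √(‖x‖ ^ 2 - r ^ 2) := by
    intro r hr hrx
    obtain ⟨ξ, hξ, hrξ⟩ := (x : H →L[ℂ] H).exists_lt_apply_of_lt_opNorm hrx
    have hY : ‖(y : H →L[ℂ] H) ξ‖ ≤ √(‖x‖ ^ 2 - r ^ 2) := by
      apply Real.le_sqrt_of_sq_le
      rw [hYξ]
      have h1 : ‖ξ‖ ^ 2 ≤ 1 := pow_le_one₀ (norm_nonneg _) hξ.le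
      have h2 : ‖x‖ ^ 2 * ‖ξ‖ ^ 2 ≤ ‖x‖ ^ 2 * 1 := by gcongr
      have h3 : r ^ 2 ≤ ‖(x : H →L[ℂ] H) ξ‖ ^ 2 := by gcongr
      linarith
    have h4 := im_inner_apply_le hD hy hyx ξ
    have h5 : ‖ξ‖ * (‖D y‖ * ‖(y : H →L[ℂ] H) ξ‖) ≤ ‖D y‖ * √(‖x‖ ^ 2 - r ^ 2) := by
      calc _ ≤ 1 * (‖D y‖ * √(‖x‖ ^ 2 - r ^ 2)) := by gcongr
        _ = _ := one_mul _
    have hxξ : ‖(x : H →L[ℂ] H) ξ‖ ≤ ‖x‖ :=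
      ((x : H →L[ℂ] H).le_opNorm ξ).trans (mul_le_of_le_one_right (norm_nonneg _) hξ.le)
    have h6 : ‖inner ℂ ((x : H →L[ℂ] H) ξ) (((z • x - D x : M.toStarSubalgebra) :
        H →L[ℂ] H) ξ)‖ ≤ ‖x‖ * ‖z • x - D x‖ := by
      refine (norm_inner_le_norm _ _).trans ?_
      gcongr
      exact (ContinuousLinearMap.le_opNorm _ ξ).trans
        (mul_le_of_le_one_right (norm_nonneg _) hξ.le)
    have h7 : inner ℂ ((x : H →L[ℂ] H) ξ) (((z • x - D x : M.toStarSubalgebra) :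
        H →L[ℂ] H) ξ) = z * ((‖(x : H →L[ℂ] H) ξ‖ ^ 2 : ℝ) : ℂ) -
          inner ℂ ((x : H →L[ℂ] H) ξ) ((D x : H →L[ℂ] H) ξ) := by
      have h8 : ((z • x - D x : M.toStarSubalgebra) : H →L[ℂ] H) ξ =
        z • (x : H →L[ℂ] H) ξ - (D x : H →L[ℂ] H) ξ := rfl
      rw [h8, inner_sub_right, inner_smul_right, inner_self_eq_norm_sq_to_K]
      push_cast
      rfl
    have h9 := (abs_im_le_norm _).trans h6
    rw [h7, sub_im, im_mul_ofReal] at h9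
    have h10 : |z.im| * ‖(x : H →L[ℂ] H) ξ‖ ^ 2 = |z.im * ‖(x : H →L[ℂ] H) ξ‖ ^ 2| := by
      rw [abs_mul, abs_of_nonneg (sq_nonneg ‖(x : H →L[ℂ] H) ξ‖)]
    have h11 := abs_sub_abs_le_abs_sub (z.im * ‖(x : H →L[ℂ] H) ξ‖ ^ 2)
      (inner ℂ ((x : H →L[ℂ] H) ξ) ((D x : H →L[ℂ] H) ξ)).im
    have h12 : |z.im| * r ^ 2 ≤ |z.im| * ‖(x : H →L[ℂ] H) ξ‖ ^ 2 := by gcongr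
    linarith
  have hlim : |z.im| * ‖x‖ ^ 2 ≤
      ‖x‖ * ‖z • x - D x‖ + ‖D y‖ * √(‖x‖ ^ 2 - ‖x‖ ^ 2) := by
    have hl : Continuous fun r : ℝ => |z.im| * r ^ 2 := by fun_prop
    have hr : Continuous fun r : ℝ =>
      ‖x‖ * ‖z • x - D x‖ + ‖D y‖ * √(‖x‖ ^ 2 - r ^ 2) := by fun_prop
    refine le_of_tendsto_of_tendsto (b := 𝓝[<] ‖x‖)
      ((hl.tendsto _).mono_left nhdsWithin_le_nhds) ((hr.tendsto _).mono_left nhdsWithin_le_nhds) ?_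
    filter_upwards [Ioo_mem_nhdsLT h0] with r hr
    exact hbound r hr.1 hr.2
  rw [sub_self, Real.sqrt_zero, mul_zero, add_zero] at hlim
  nlinarith

end VonNeumannAlgebra

/-- (Sakai–Kadison) Every derivation of a von Neumann algebra is inner. -/
theorem sakai_kadison_inner (H : Type*) [NormedAddCommGroup H] [InnerProductSpace ℂ H]
    [CompleteSpace H] (M : VonNeumannAlgebra H)
    (D : M.toStarSubalgebra →ₗ[ℂ] M.toStarSubalgebra)
    (hD : ∀ x y : M.toStarSubalgebra, D (x * y) = D x * y + x * D y) :
    ∃ a : M.toStarSubalgebra, ∀ x : M.toStarSubalgebra, D x = a * x - x * a :=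
  exists_eq_mul_sub_mul_of_derivation M.hasLeftSupports
    (fun _ hT => VonNeumannAlgebra.im_mul_norm_le hT) D hD
end

section
/- (Pearcy–Topping) Let H be a separable infinite-dimensional complex Hilbert space. Then every compact operator T on H is a finite sum of commutators of compact operators: there exist n ∈ ℕ and compact operators A₁, …, Aₙ, B₁, …, Bₙ on H such that T = Σᵢ₌₁ⁿ (AᵢBᵢ − BᵢAᵢ). -/
open ContinuousLinearMap ComplexStarModule

section CompactCommutators

variable {H : Type*} [NormedAddCommGroup H] [InnerProductSpace ℂ H]

theorem IsCompactOperator.mul_right {A : H →L[ℂ] H} (hA : IsCompactOperator A) (B : H →L[ℂ] H) :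
    IsCompactOperator (A * B) :=
  hA.comp_clm B

theorem IsCompactOperator.mul_left {A : H →L[ℂ] H} (hA : IsCompactOperator A) (B : H →L[ℂ] H) :
    IsCompactOperator (B * A) :=
  hA.clm_comp B

variable (H) in
/-- The span of the commutators of compact operators. -/
def compactCommutatorSpan : Submodule ℂ (H →L[ℂ] H) :=
  Submodule.span ℂ {X | ∃ A B : H →L[ℂ] H,
    IsCompactOperator A ∧ IsCompactOperator B ∧ X = A * B - B * A}

theorem commutator_mem_compactCommutatorSpan {A B : H →L[ℂ] H} (hA : IsCompactOperator A)
    (hB : IsCompactOperator B) : A * B - B * A ∈ compactCommutatorSpan H :=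
  Submodule.subset_span ⟨A, B, hA, hB, rfl⟩

variable [CompleteSpace H]

/-- An operator `A` is compact as soon as `A⋆ A` is. -/
theorem isCompactOperator_of_star_mul_self {A : H →L[ℂ] H}
    (h : IsCompactOperator (star A * A)) : IsCompactOperator A := by
  have hP : IsCompactOperator ((star A * A : H →L[ℂ] H) : H →ₗ[ℂ] H) := h
  have hball := (hP.isCompact_closure_image_ball 1).totallyBounded.subset subset_closure
  refine (isCompactOperator_iff_isCompact_closure_image_ball (A : H →ₗ[ℂ] H) one_pos).2 ?_
  refine TotallyBounded.isCompact_of_isClosed (TotallyBounded.closure ?_) isClosed_closure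
  refine Metric.totallyBounded_iff.2 fun ε hε ↦ ?_
  obtain ⟨t, ht, htf, hcov⟩ :=
    Metric.finite_approx_of_totallyBounded hball (ε ^ 2 / 2) (by positivity)
  have hpre : ∀ y ∈ t, ∃ x ∈ Metric.ball (0 : H) 1, (star A * A) x = y := fun y hy ↦ ht hy
  choose! g hg hgt using hpre
  refine ⟨(fun y ↦ A (g y)) '' t, htf.image _, ?_⟩
  rintro _ ⟨x, hx, rfl⟩
  obtain ⟨y, hy, hxy⟩ := Set.mem_iUnion₂.1 (hcov ⟨x, hx, rfl⟩)
  refine Set.mem_iUnion₂.2 ⟨A (g y), ⟨y, hy, rfl⟩, ?_⟩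
  have hgy := hgt y hy
  have hball_y := hg y hy
  rw [mem_ball_zero_iff] at hx hball_y
  rw [← hgy, Metric.mem_ball, dist_eq_norm] at hxy
  change ‖(star A * A) x - (star A * A) (g y)‖ < ε ^ 2 / 2 at hxy
  rw [Metric.mem_ball, dist_eq_norm]
  change ‖A x - A (g y)‖ < ε
  rw [← map_sub] at hxy ⊢
  have hsub : ‖x - g y‖ ≤ 2 := (norm_sub_le _ _).trans (by linarith)
  have hsq : ‖A (x - g y)‖ ^ 2 ≤ ‖(star A * A) (x - g y)‖ * ‖x - g y‖ := by
    rw [ContinuousLinearMap.apply_norm_sq_eq_inner_adjoint_left]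
    exact (RCLike.re_le_norm _).trans (norm_inner_le_norm _ _)
  refine lt_of_pow_lt_pow_left₀ 2 hε.le (hsq.trans_lt ?_)
  nlinarith [norm_nonneg ((star A * A) (x - g y)), norm_nonneg (x - g y)]

theorem isCompactOperator_star {A : H →L[ℂ] H} (hA : IsCompactOperator A) :
    IsCompactOperator (star A : H →L[ℂ] H) :=
  isCompactOperator_of_star_mul_self (by simpa using hA.mul_right (star A))

theorem IsSelfAdjoint.isCompactOperator_of_pow_two {A : H →L[ℂ] H} (hA : IsSelfAdjoint A)
    (h : IsCompactOperator (A ^ 2 : H →L[ℂ] H)) : IsCompactOperator A :=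
  isCompactOperator_of_star_mul_self (by rwa [hA.star_eq, ← sq])

/-- If `f ^ 4 = x ^ 2` then `f(X)` is compact for every compact self-adjoint `X`. -/
theorem IsCompactOperator.cfc_of_pow_four {X : H →L[ℂ] H} (hX : IsCompactOperator X)
    (hsa : IsSelfAdjoint X) {f : ℝ → ℝ} (hf : Continuous f) (h : ∀ x, f x ^ 4 = x ^ 2) :
    IsCompactOperator (cfc f X : H →L[ℂ] H) := by
  have hsaf : IsSelfAdjoint (cfc f X) := IsSelfAdjoint.cfc
  refine hsaf.isCompactOperator_of_pow_two ((hsaf.pow 2).isCompactOperator_of_pow_two ?_)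
  have : (cfc f X ^ 2) ^ 2 = X * X := by
    rw [← pow_mul, ← cfc_pow f _ X hf.continuousOn]
    simp_rw [h]
    rw [cfc_pow_id (R := ℝ) X 2, sq]
  rw [this]
  exact hX.mul_right X

theorem IsCompactOperator.exists_mul_eq_of_isSelfAdjoint {X : H →L[ℂ] H}
    (hX : IsCompactOperator X) (hsa : IsSelfAdjoint X) :
    ∃ A B : H →L[ℂ] H, IsCompactOperator A ∧ IsCompactOperator B ∧ A * B = X := by
  set f : ℝ → ℝ := fun x ↦ √|x|
  set g : ℝ → ℝ := fun x ↦ √(max x 0) - √(max (-x) 0)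
  have hf : Continuous f := by fun_prop
  have hg : Continuous g := by fun_prop
  have hf4 (x : ℝ) : f x ^ 4 = x ^ 2 := by
    simp only [f]
    rw [show 4 = 2 * 2 from rfl, pow_mul, Real.sq_sqrt (abs_nonneg x), sq_abs]
  have hgf (x : ℝ) : g x = f x ∧ 0 ≤ x ∨ g x = - f x ∧ x ≤ 0 := by
    rcases le_total 0 x with hx | hx
    · left; simp [f, g, hx, abs_of_nonneg]
    · right; simp [f, g, hx, abs_of_nonpos]
  have hg4 (x : ℝ) : g x ^ 4 = x ^ 2 := by
    rw [← hf4 x]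
    rcases hgf x with h | h <;> rw [h.1]
    ring
  refine ⟨cfc g X, cfc f X, hX.cfc_of_pow_four hsa hg hg4, hX.cfc_of_pow_four hsa hf hf4, ?_⟩
  rw [← cfc_mul g f X hg.continuousOn hf.continuousOn]
  conv_rhs => rw [← cfc_id' ℝ X]
  congr 1
  ext x
  have hff : f x * f x = |x| := Real.mul_self_sqrt (abs_nonneg x)
  rcases hgf x with ⟨h, hx⟩ | ⟨h, hx⟩ <;> rw [h]
  · rw [hff, abs_of_nonneg hx]
  · rw [neg_mul, hff, abs_of_nonpos hx, neg_neg]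

theorem mul_sub_conj_mul_mem_compactCommutatorSpan {A B S : H →L[ℂ] H}
    (hA : IsCompactOperator A) (hB : IsCompactOperator B) (hS : star S * S = 1) :
    A * B - S * (A * B) * star S ∈ compactCommutatorSpan H := by
  have h₁ := commutator_mem_compactCommutatorSpan hA hB
  have h₂ := commutator_mem_compactCommutatorSpan (hB.mul_right (star S)) (hA.mul_left S)
  have : A * B - S * (A * B) * star S =
      (A * B - B * A) + (B * star S * (S * A) - S * A * (B * star S)) := by
    rw [show B * star S * (S * A) = B * (star S * S) * A by noncomm_ring, hS]
    noncomm_ring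
  rw [this]
  exact add_mem h₁ h₂

/-- Conjugating a compact operator by an isometry changes it by a sum of commutators. -/
theorem sub_conj_mem_compactCommutatorSpan {X S : H →L[ℂ] H} (hX : IsCompactOperator X)
    (hS : star S * S = 1) : X - S * X * star S ∈ compactCommutatorSpan H := by
  have key {Y : H →L[ℂ] H} (hY : IsCompactOperator Y) (hsa : IsSelfAdjoint Y) :
      Y - S * Y * star S ∈ compactCommutatorSpan H := by
    obtain ⟨A, B, hA, hB, rfl⟩ := hY.exists_mul_eq_of_isSelfAdjoint hsa
    exact mul_sub_conj_mul_mem_compactCommutatorSpan hA hB hS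
  have hre : IsCompactOperator (ℜ X : H →L[ℂ] H) := by
    rw [realPart_apply_coe]
    exact (hX.add (isCompactOperator_star hX)).smul (2⁻¹ : ℝ)
  have him : IsCompactOperator (ℑ X : H →L[ℂ] H) := by
    rw [imaginaryPart_apply_coe]
    exact ((hX.sub (isCompactOperator_star hX)).smul (2⁻¹ : ℝ)).smul (-Complex.I)
  have h := add_mem (key hre (ℜ X).2)
    (Submodule.smul_mem _ Complex.I (key him (ℑ X).2))
  have hsum := realPart_add_I_smul_imaginaryPart X
  convert h using 1
  conv_lhs => rw [← hsum]
  simp only [mul_add, add_mul, smul_sub, mul_smul_comm, smul_mul_assoc]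
  abel

/-- An injection of the index set of a Hilbert basis induces an isometry. -/
theorem HilbertBasis.exists_isometry_apply {ι : Type*} (b : HilbertBasis ι ℂ H) {f : ι → ι}
    (hf : Function.Injective f) :
    ∃ S : H →L[ℂ] H, star S * S = 1 ∧ ∀ i, S (b i) = b (f i) := by
  classical
  have ho := (b.orthonormal.comp f hf).orthogonalFamily
  let L : H →ₗᵢ[ℂ] H := ho.linearIsometry.comp b.repr.toLinearIsometry
  refine ⟨L.toContinuousLinearMap, ?_, fun i ↦ ?_⟩
  · exact (ContinuousLinearMap.norm_map_iff_adjoint_comp_self _).1 L.norm_map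
  · change ho.linearIsometry (b.repr (b i)) = _
    rw [b.repr_self, ho.linearIsometry_apply_single]
    simp

theorem exists_isometries_orthogonal_ranges (hinf : ¬ FiniteDimensional ℂ H) :
    ∃ S₁ S₂ : H →L[ℂ] H, star S₁ * S₁ = 1 ∧ star S₂ * S₂ = 1 ∧ star S₁ * S₂ = 0 := by
  obtain ⟨w, b, -⟩ := exists_hilbertBasis ℂ H
  have : Infinite w := by
    by_contra hfin
    rw [not_infinite_iff_finite] at hfin
    have := Fintype.ofFinite w
    exact hinf b.toOrthonormalBasis.toBasis.finiteDimensional_of_finite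
  obtain ⟨e⟩ : Nonempty (w ⊕ w ≃ w) := Cardinal.eq.1 (by simp)
  obtain ⟨S₁, h₁, hb₁⟩ := b.exists_isometry_apply (e.injective.comp Sum.inl_injective)
  obtain ⟨S₂, h₂, hb₂⟩ := b.exists_isometry_apply (e.injective.comp Sum.inr_injective)
  refine ⟨S₁, S₂, h₁, h₂, ?_⟩
  have hd := Submodule.dense_iff_topologicalClosure_eq_top.2 b.dense_span
  refine ContinuousLinearMap.ext_on hd ?_
  rintro _ ⟨j, rfl⟩
  refine b.repr.injective ?_
  ext i
  rw [b.repr_apply_apply, b.repr_apply_apply]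
  change inner ℂ (b i) (adjoint S₁ (S₂ (b j))) = inner ℂ (b i) 0
  rw [adjoint_inner_right, hb₁, hb₂, inner_zero_right]
  exact b.orthonormal.2 (e.injective.ne Sum.inl_ne_inr)

/-- Conjugation by two isometries with orthogonal ranges does not increase the norm. -/
theorem norm_conj_add_conj_le {S₁ S₂ : H →L[ℂ] H} (h₁ : star S₁ * S₁ = 1)
    (h₂ : star S₂ * S₂ = 1) (h₁₂ : star S₁ * S₂ = 0) (X : H →L[ℂ] H) :
    ‖S₁ * X * star S₁ + S₂ * X * star S₂‖ ≤ ‖X‖ := by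
  have pyth (u v : H) : ‖S₁ u + S₂ v‖ ^ 2 = ‖u‖ ^ 2 + ‖v‖ ^ 2 := by
    have hn₁ := (ContinuousLinearMap.norm_map_iff_adjoint_comp_self S₁).2 h₁ u
    have hn₂ := (ContinuousLinearMap.norm_map_iff_adjoint_comp_self S₂).2 h₂ v
    have h0 : inner ℂ (S₁ u) (S₂ v) = 0 := by
      rw [← ContinuousLinearMap.adjoint_inner_right]
      change inner ℂ u ((star S₁ * S₂) v) = 0
      simp [h₁₂]
    have := norm_add_sq_eq_norm_sq_add_norm_sq_of_inner_eq_zero (𝕜 := ℂ) _ _ h0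
    rw [hn₁, hn₂] at this
    nlinarith
  have bessel (v : H) : ‖star S₁ v‖ ^ 2 + ‖star S₂ v‖ ^ 2 ≤ ‖v‖ ^ 2 := by
    have hp := pyth (star S₁ v) (star S₂ v)
    have hin : ‖star S₁ v‖ ^ 2 + ‖star S₂ v‖ ^ 2
        = RCLike.re (inner ℂ (S₁ (star S₁ v) + S₂ (star S₂ v)) v) := by
      rw [inner_add_left, ← ContinuousLinearMap.adjoint_inner_right S₁,
        ← ContinuousLinearMap.adjoint_inner_right S₂, map_add]
      simp only [ContinuousLinearMap.star_eq_adjoint, inner_self_eq_norm_sq]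
    have hcs := (RCLike.re_le_norm _).trans
      (norm_inner_le_norm (𝕜 := ℂ) (S₁ (star S₁ v) + S₂ (star S₂ v)) v)
    rw [← hin, ← hp] at hcs
    rw [← hp]
    nlinarith [norm_nonneg (S₁ (star S₁ v) + S₂ (star S₂ v)), norm_nonneg v]
  refine ContinuousLinearMap.opNorm_le_bound _ (norm_nonneg X) fun v ↦ ?_
  refine le_of_sq_le_sq ?_ (by positivity)
  change ‖S₁ (X (star S₁ v)) + S₂ (X (star S₂ v))‖ ^ 2 ≤ _
  rw [pyth]
  calc ‖X (star S₁ v)‖ ^ 2 + ‖X (star S₂ v)‖ ^ 2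
      ≤ (‖X‖ * ‖star S₁ v‖) ^ 2 + (‖X‖ * ‖star S₂ v‖) ^ 2 := by
        gcongr <;> exact X.le_opNorm _
    _ = ‖X‖ ^ 2 * (‖star S₁ v‖ ^ 2 + ‖star S₂ v‖ ^ 2) := by ring
    _ ≤ ‖X‖ ^ 2 * ‖v‖ ^ 2 := by gcongr; exact bessel v
    _ = (‖X‖ * ‖v‖) ^ 2 := by ring

theorem IsCompactOperator.exists_eq_add_half_conj {S₁ S₂ T : H →L[ℂ] H}
    (hT : IsCompactOperator T) (h₁ : star S₁ * S₁ = 1) (h₂ : star S₂ * S₂ = 1)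
    (h₁₂ : star S₁ * S₂ = 0) :
    ∃ X : H →L[ℂ] H, IsCompactOperator X ∧
      X = T + (2⁻¹ : ℂ) • (S₁ * X * star S₁ + S₂ * X * star S₂) := by
  set F : (H →L[ℂ] H) → (H →L[ℂ] H) :=
    fun X ↦ T + (2⁻¹ : ℂ) • (S₁ * X * star S₁ + S₂ * X * star S₂) with hF
  set s : Set (H →L[ℂ] H) := {X | IsCompactOperator X}
  have hcomplete : IsComplete s := isClosed_setOfPred_isCompactOperator.isComplete
  have hmaps : Set.MapsTo F s s := fun X hX ↦
    hT.add ((((IsCompactOperator.mul_left hX S₁).mul_right _).add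
      ((IsCompactOperator.mul_left hX S₂).mul_right _)).smul (2⁻¹ : ℂ))
  have hlip : LipschitzWith 2⁻¹ F := by
    refine LipschitzWith.of_dist_le_mul fun X Y ↦ ?_
    have : F X - F Y = (2⁻¹ : ℂ) • (S₁ * (X - Y) * star S₁ + S₂ * (X - Y) * star S₂) := by
      simp only [hF, mul_sub, sub_mul, smul_add, smul_sub]
      abel
    rw [dist_eq_norm, dist_eq_norm, this, norm_smul]
    simpa using norm_conj_add_conj_le h₁ h₂ h₁₂ (X - Y)
  have hcontr : ContractingWith 2⁻¹ (hmaps.restrict F s s) :=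
    ⟨inv_lt_one_of_one_lt₀ one_lt_two, fun X Y ↦ hlip X Y⟩
  obtain ⟨X, hX, hfix, -⟩ := hcontr.exists_fixedPoint' hcomplete hmaps hT (edist_ne_top _ _)
  exact ⟨X, hX, hfix.symm⟩

theorem IsCompactOperator.mem_compactCommutatorSpan {T : H →L[ℂ] H} (hT : IsCompactOperator T)
    (hinf : ¬ FiniteDimensional ℂ H) : T ∈ compactCommutatorSpan H := by
  obtain ⟨S₁, S₂, h₁, h₂, h₁₂⟩ := exists_isometries_orthogonal_ranges hinf
  obtain ⟨X, hX, hfix⟩ := hT.exists_eq_add_half_conj h₁ h₂ h₁₂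
  have h := Submodule.smul_mem _ (2⁻¹ : ℂ) (add_mem (sub_conj_mem_compactCommutatorSpan hX h₁)
    (sub_conj_mem_compactCommutatorSpan hX h₂))
  convert h using 1
  have hT' : T = X - (2⁻¹ : ℂ) • (S₁ * X * star S₁ + S₂ * X * star S₂) :=
    eq_sub_of_add_eq hfix.symm
  rw [hT']
  module

end CompactCommutators

/-- (Pearcy–Topping) On a separable infinite-dimensional complex Hilbert space, every
compact operator is a finite sum of commutators of compact operators. -/
theorem pearcy_topping (H : Type*) [NormedAddCommGroup H] [InnerProductSpace ℂ H]
    [CompleteSpace H] [TopologicalSpace.SeparableSpace H]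
    (hinf : ¬ FiniteDimensional ℂ H)
    (T : H →L[ℂ] H) (hT : IsCompactOperator T) :
    ∃ (n : ℕ) (A B : Fin n → H →L[ℂ] H),
      (∀ i, IsCompactOperator (A i)) ∧ (∀ i, IsCompactOperator (B i)) ∧
      T = ∑ i, (A i * B i - B i * A i) := by
  obtain ⟨n, c, g, hsum⟩ := Submodule.mem_span_set'.1 (hT.mem_compactCommutatorSpan hinf)
  choose A B hA hB hAB using fun i ↦ (g i).2
  refine ⟨n, fun i ↦ c i • A i, B, fun i ↦ (hA i).smul (c i), hB, ?_⟩
  rw [← hsum]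
  refine Finset.sum_congr rfl fun i _ ↦ ?_
  rw [hAB i, smul_sub, smul_mul_assoc, mul_smul_comm]
end

section
/- (Ringrose) Let A be a C*-algebra and X a Banach A-bimodule. Then every derivation D : A → X, i.e., every linear map satisfying D(ab) = a·D(b) + D(a)·b for all a, b ∈ A, is automatically continuous. -/
section Factorization

variable {A : Type*} [CStarAlgebra A] [PartialOrder A] [StarOrderedRing A]

/-- The resolvent `r = (a + ε)⁻¹` of a nonnegative element, with its basic norm estimates. -/
theorem exists_resolvent_of_nonneg {a : A} (ha : 0 ≤ a) {ε : ℝ} (hε : 0 < ε) :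
    ∃ r : A, IsSelfAdjoint r ∧ Commute r a ∧ r * a + ε • r = 1 ∧ ‖r * a‖ ≤ 1 ∧ ‖r‖ ≤ ε⁻¹ := by
  have hpos : ∀ t ∈ spectrum ℝ a, 0 ≤ t := fun t ht => spectrum_nonneg_of_nonneg ha ht
  have hne : ∀ t ∈ spectrum ℝ a, t + ε ≠ 0 := fun t ht => by
    have := hpos t ht
    positivity
  have hcont : ContinuousOn (fun t : ℝ => (t + ε)⁻¹) (spectrum ℝ a) :=
    ContinuousOn.inv₀ (by fun_prop) hne
  have hsa : IsSelfAdjoint a := ha.isSelfAdjoint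
  have hmul : cfc (fun t : ℝ => (t + ε)⁻¹) a * a = cfc (fun t : ℝ => (t + ε)⁻¹ * t) a := by
    rw [cfc_mul (fun t : ℝ => (t + ε)⁻¹) (fun t => t) a hcont (by fun_prop), cfc_id' ℝ a hsa]
  refine ⟨cfc (fun t : ℝ => (t + ε)⁻¹) a, cfc_predicate _ a, ?_, ?_, ?_, ?_⟩
  · simpa only [cfc_id' ℝ a hsa] using cfc_commute_cfc (fun t : ℝ => (t + ε)⁻¹) (fun t => t) a
  · rw [hmul, ← cfc_smul ε (fun t : ℝ => (t + ε)⁻¹) a hcont,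
      ← cfc_add a (fun t : ℝ => (t + ε)⁻¹ * t) (fun t : ℝ => ε • (t + ε)⁻¹)
        (hcont.mul (by fun_prop)) (hcont.const_smul ε), ← cfc_one ℝ a]
    refine cfc_congr fun t ht => ?_
    have := hne t ht
    simp only [smul_eq_mul, Pi.one_apply]
    field_simp
  · rw [hmul]
    refine norm_cfc_le zero_le_one fun t ht => ?_
    have := hpos t ht
    rw [Real.norm_of_nonneg (by positivity), inv_mul_le_one₀ (by positivity)]
    linarith
  · refine norm_cfc_le (by positivity) fun t ht => ?_
    have := hpos t ht
    rw [Real.norm_of_nonneg (by positivity)]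
    gcongr
    linarith

/-- Domination `x * star x ≤ a ^ 4` by a nonnegative `a` makes `a` a left factor of `x`. -/
theorem exists_eq_mul_of_mul_star_le {a x : A} (ha : 0 ≤ a) (hx : x * star x ≤ a ^ 4) :
    ∃ y, x = a * y ∧ ‖y‖ ≤ ‖a‖ := by
  have hsa : IsSelfAdjoint a := ha.isSelfAdjoint
  have hb : ∀ b : A, ‖b * x‖ ≤ ‖b * a * a‖ := fun b => by
    refine (sq_le_sq₀ (norm_nonneg _) (norm_nonneg _)).mp ?_
    rw [sq, sq, ← CStarRing.norm_self_mul_star, ← CStarRing.norm_self_mul_star]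
    have h := star_right_conjugate_le_conjugate hx b
    refine (CStarAlgebra.norm_le_norm_of_nonneg_of_le (mul_star_self_nonneg _) ?_)
    simpa [mul_assoc, hsa.star_eq, pow_succ] using h
  choose r _ hrc hr1 hra _ using fun n : ℕ =>
    exists_resolvent_of_nonneg ha (ε := (1 / 2 : ℝ) ^ n) (by positivity)
  have hdiff : ∀ n m, r n - r m = ((1 / 2 : ℝ) ^ m - (1 / 2 : ℝ) ^ n) • (r n * r m) := fun n m => by
    have h1 : r n = r n * (r m * a + (1 / 2 : ℝ) ^ m • r m) := by rw [hr1, mul_one]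
    have h2 : r m = (r n * a + (1 / 2 : ℝ) ^ n • r n) * r m := by rw [hr1, one_mul]
    have h3 : r n * (r m * a) = r n * a * r m := by rw [(hrc m).eq, mul_assoc]
    calc r n - r m = r n * (r m * a + (1 / 2 : ℝ) ^ m • r m)
          - (r n * a + (1 / 2 : ℝ) ^ n • r n) * r m := by rw [← h1, ← h2]
      _ = _ := by
        rw [mul_add, add_mul, h3, mul_smul_comm, smul_mul_assoc, sub_smul]
        abel
  have hcauchy : CauchySeq fun n => r n * x := by
    refine cauchySeq_of_le_geometric (1 / 2) 1 (by norm_num) fun n => ?_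
    rw [dist_eq_norm, ← sub_mul, hdiff, smul_mul_assoc, norm_smul, mul_comm (1 : ℝ)]
    have h1 : ‖r n * r (n + 1) * x‖ ≤ 1 := by
      refine (hb _).trans ?_
      have h3 : r n * r (n + 1) * a * a = r n * a * (r (n + 1) * a) := by
        simp only [mul_assoc, (hrc (n + 1)).left_comm]
      rw [h3]
      exact (norm_mul_le _ _).trans (mul_le_one₀ (hra _) (norm_nonneg _) (hra _))
    refine mul_le_mul ?_ h1 (norm_nonneg _) (by positivity)
    have : (0 : ℝ) < (1 / 2) ^ n := by positivity
    rw [Real.norm_eq_abs, abs_le, pow_succ]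
    constructor <;> linarith
  obtain ⟨y, hy⟩ := cauchySeq_tendsto_of_complete hcauchy
  have hbound : ∀ n, ‖r n * x‖ ≤ ‖a‖ := fun n => (hb _).trans <| (norm_mul_le _ _).trans <|
    mul_le_of_le_one_left (norm_nonneg _) (hra n)
  refine ⟨y, ?_, le_of_tendsto hy.norm (Filter.Eventually.of_forall hbound)⟩
  have h1 : Filter.Tendsto (fun n => a * (r n * x)) Filter.atTop (nhds (a * y)) :=
    hy.const_mul a
  refine tendsto_nhds_unique ?_ h1
  rw [tendsto_iff_norm_sub_tendsto_zero]
  have hlim : Filter.Tendsto (fun n : ℕ => (1 / 2 : ℝ) ^ n * ‖a‖) Filter.atTop (nhds 0) := by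
    simpa using (tendsto_pow_atTop_nhds_zero_of_lt_one (r := (1 / 2 : ℝ)) (by norm_num)
      (by norm_num)).mul_const ‖a‖
  refine squeeze_zero (fun _ => norm_nonneg _) (fun n => ?_) hlim
  have h2 : a * (r n * x) - x = -((1 / 2 : ℝ) ^ n • (r n * x)) := by
    have h3 : x = (r n * a + (1 / 2 : ℝ) ^ n • r n) * x := by rw [hr1, one_mul]
    nth_rw 2 [h3]
    rw [add_mul, (hrc n).eq, smul_mul_assoc, mul_assoc]
    abel
  rw [h2, norm_neg, norm_smul, Real.norm_of_nonneg (by positivity)]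
  gcongr
  exact hbound n

end Factorization

section ClosedIdeal

variable {A : Type*} [CStarAlgebra A] {J : Submodule ℂ A}

theorem mem_of_star_mul_self_mem (hl : ∀ a, ∀ b ∈ J, a * b ∈ J) (hJ : IsClosed (J : Set A))
    {x : A} (hx : star x * x ∈ J) : x ∈ J := by
  let _ := CStarAlgebra.spectralOrder A
  have _ := CStarAlgebra.spectralOrderedRing A
  rw [← SetLike.mem_coe, ← hJ.closure_eq, Metric.mem_closure_iff]
  intro δ hδ
  obtain ⟨r, hrsa, hrc, hr1, hra, hr⟩ :=
    exists_resolvent_of_nonneg (star_mul_self_nonneg x) (ε := δ ^ 2 / 2) (by positivity)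
  refine ⟨x * r * (star x * x), hl _ _ hx, ?_⟩
  have h1 : x - x * r * (star x * x) = (δ ^ 2 / 2) • (x * r) := by
    nth_rw 1 [← mul_one x, ← hr1]
    rw [mul_add, mul_assoc x r, mul_smul_comm]
    abel
  have h2 : ‖x * r‖ ^ 2 ≤ (δ ^ 2 / 2)⁻¹ := by
    rw [sq, ← CStarRing.norm_star_mul_self, star_mul, hrsa.star_eq]
    calc ‖r * star x * (x * r)‖ = ‖r * (star x * x) * r‖ := by simp only [mul_assoc]
      _ ≤ 1 * (δ ^ 2 / 2)⁻¹ := (norm_mul_le _ _).trans (by gcongr)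
      _ = _ := one_mul _
  rw [dist_eq_norm, h1, norm_smul, Real.norm_of_nonneg (by positivity)]
  refine lt_of_pow_lt_pow_left₀ 2 hδ.le ?_
  calc (δ ^ 2 / 2 * ‖x * r‖) ^ 2 = (δ ^ 2 / 2) ^ 2 * ‖x * r‖ ^ 2 := mul_pow _ _ _
    _ ≤ (δ ^ 2 / 2) ^ 2 * (δ ^ 2 / 2)⁻¹ := by gcongr
    _ = δ ^ 2 / 2 := by field_simp
    _ < δ ^ 2 := by linarith [pow_pos hδ 2]

theorem star_mem_of_mem (hl : ∀ a, ∀ b ∈ J, a * b ∈ J) (hr : ∀ a, ∀ b ∈ J, b * a ∈ J)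
    (hJ : IsClosed (J : Set A)) {x : A} (hx : x ∈ J) : star x ∈ J :=
  mem_of_star_mul_self_mem hl hJ (by simpa using hr _ _ hx)

/-- A square-summable sequence in a closed two-sided ideal has a common left factor in the ideal,
with bounded right factors. -/
theorem exists_common_factor (hl : ∀ a, ∀ b ∈ J, a * b ∈ J) (hr : ∀ a, ∀ b ∈ J, b * a ∈ J)
    (hJ : IsClosed (J : Set A)) {x : ℕ → A} (hx : ∀ n, x n ∈ J)
    (hsum : Summable fun n => ‖x n‖ ^ 2) :
    ∃ a ∈ J, ∀ n, ∃ y, x n = a * y ∧ ‖y‖ ≤ ‖a‖ := by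
  let _ := CStarAlgebra.spectralOrder A
  have _ := CStarAlgebra.spectralOrderedRing A
  have hs : Summable fun n => x n * star (x n) :=
    Summable.of_norm (by simpa only [CStarRing.norm_self_mul_star, sq] using hsum)
  set h := ∑' n, x n * star (x n)
  have hh : 0 ≤ h := tsum_nonneg fun n => mul_star_self_nonneg _
  have hhJ : h ∈ J := by
    have : IsClosed (J.toAddSubmonoid : Set A) := hJ
    exact tsum_mem this (s := J.toAddSubmonoid) fun n => hr _ _ (hx n)
  have hroot : ∀ b : A, 0 ≤ b → b ∈ J → CFC.sqrt b ∈ J := fun b hb hbJ =>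
    mem_of_star_mul_self_mem hl hJ (by
      rwa [(CFC.sqrt_nonneg b).isSelfAdjoint.star_eq, CFC.sqrt_mul_sqrt_self b hb])
  refine ⟨CFC.sqrt (CFC.sqrt h), hroot _ (CFC.sqrt_nonneg _) (hroot _ hh hhJ), fun n => ?_⟩
  refine exists_eq_mul_of_mul_star_le (CFC.sqrt_nonneg _) ?_
  rw [show (4 : ℕ) = 2 * 2 from rfl, pow_mul, CFC.sq_sqrt _ (CFC.sqrt_nonneg _), CFC.sq_sqrt _ hh]
  exact hs.le_tsum n fun m _ => mul_star_self_nonneg _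

end ClosedIdeal

section FiniteCodimension

variable {A : Type*} [CStarAlgebra A] {J : Submodule ℂ A}

/-- The right annihilator of a set modulo `J`. -/
def rightAnnihilatorMod (J : Submodule ℂ A) (E : Set A) : Set A := {b | ∀ a ∈ E, a * b ∈ J}

theorem rightAnnihilatorMod_anti (J : Submodule ℂ A) {E F : Set A} (h : E ⊆ F) :
    rightAnnihilatorMod J F ⊆ rightAnnihilatorMod J E :=
  fun _ hb a ha => hb a (h ha)

/-- There are no sequences `a`, `b` with `a n * b m ∈ J` for `n < m` and `a n * b n ∉ J`; this is
the descending chain condition on right annihilators modulo `J`. -/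
def NoTriangularSequence (J : Submodule ℂ A) : Prop :=
  ∀ a b : ℕ → A, (∀ n m, n < m → a n * b m ∈ J) → ∃ n, a n * b n ∈ J

theorem NoTriangularSequence.wellFounded (hJ : NoTriangularSequence J) :
    WellFounded (InvImage (· ⊂ ·) (rightAnnihilatorMod J)) := by
  rw [wellFounded_iff_isEmpty_descending_chain]
  refine ⟨fun ⟨E, hE⟩ => ?_⟩
  have hE' : ∀ n, rightAnnihilatorMod J (E (n + 1)) ⊂ rightAnnihilatorMod J (E n) := hE
  have hanti : Antitone fun n => rightAnnihilatorMod J (E n) :=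
    antitone_nat_of_succ_le fun n => (hE' n).subset
  choose b hb hb' using fun n => Set.exists_of_ssubset (hE' n)
  have : ∀ n, ∃ a ∈ E (n + 1), a * b n ∉ J := fun n => by
    have := hb' n
    simpa [rightAnnihilatorMod] using this
  choose a ha ha' using this
  obtain ⟨n, hn⟩ := hJ a b fun n m hnm => hanti (Nat.succ_le_of_lt hnm) (hb m) _ (ha n)
  exact ha' n hn

/-- If the disjoint truncations of `t * (t - s)` never both survive modulo `J`, then `h` is
proportional to an idempotent modulo `J`. -/
theorem exists_mul_self_sub_smul_mem (hJ : IsClosed (J : Set A)) {h : A} (hh : IsSelfAdjoint h)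
    (H : ∀ u v : A, IsSelfAdjoint (h * u) → h * u * (h * v) = 0 → h * u ∈ J ∨ h * v ∈ J) :
    ∃ c : ℝ, h * h - c • h ∈ J := by
  set F : ℝ → A := fun s => h * cfc (fun t : ℝ => max (t - s) 0) h with hF
  set G : ℝ → A := fun s => h * cfc (fun t : ℝ => max (s - t) 0) h with hG
  have hcont : ∀ f : ℝ → ℝ → ℝ, (∀ s, Continuous (f s)) →
      (∀ s s' t, |f s t - f s' t| ≤ |s - s'|) → Continuous fun s => cfc (f s) h := by
    intro f hf hlip
    refine (LipschitzWith.of_dist_le_mul (K := 1) fun s s' => ?_).continuous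
    rw [dist_eq_norm, ← cfc_sub (f s) (f s') h (hf s).continuousOn (hf s').continuousOn,
      NNReal.coe_one, one_mul, Real.dist_eq]
    exact norm_cfc_le (abs_nonneg _) fun t _ => hlip s s' t
  have hFcont : Continuous F := by
    refine continuous_const.mul (hcont _ (fun s => by fun_prop) fun s s' t => ?_)
    refine (abs_max_sub_max_le_abs _ _ _).trans_eq ?_
    rw [sub_sub_sub_cancel_left, abs_sub_comm]
  have hGcont : Continuous G := by
    refine continuous_const.mul (hcont _ (fun s => by fun_prop) fun s s' t => ?_)
    refine (abs_max_sub_max_le_abs _ _ _).trans_eq ?_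
    rw [sub_sub_sub_cancel_right]
  have hsub : ∀ s, F s - G s = h * h - s • h := fun s => by
    have : cfc (fun t : ℝ => max (t - s) 0) h - cfc (fun t : ℝ => max (s - t) 0) h
        = h - s • (1 : A) := by
      rw [← cfc_sub (fun t : ℝ => max (t - s) 0) (fun t : ℝ => max (s - t) 0) h]
      calc _ = cfc (fun t : ℝ => t - s) h := by
            refine cfc_congr fun t _ => ?_
            rcases le_total t s with hts | hts
            · rw [max_eq_right (by linarith), max_eq_left (by linarith)]; ring
            · rw [max_eq_left (by linarith), max_eq_right (by linarith)]; ring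
        _ = _ := by
            rw [cfc_sub (fun t : ℝ => t) (fun _ => s) h, cfc_id' ℝ h, cfc_const s h,
              Algebra.algebraMap_eq_smul_one]
    rw [hF, hG]
    simp only
    rw [← mul_sub, this, mul_sub, mul_smul_comm, mul_one]
  have hcover : ∀ s, F s ∈ J ∨ G s ∈ J := fun s => by
    have hc : Commute h (cfc (fun t : ℝ => max (t - s) 0) h) := by
      simpa only [cfc_id' ℝ h hh] using
        cfc_commute_cfc (fun t : ℝ => t) (fun t : ℝ => max (t - s) 0) h
    refine H _ _ ?_ ?_
    · exact (hh.commute_iff (cfc_predicate _ h)).mp hc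
    · have hzero : cfc (fun t : ℝ => max (t - s) 0) h * cfc (fun t : ℝ => max (s - t) 0) h = 0 := by
        rw [← cfc_mul (fun t : ℝ => max (t - s) 0) (fun t : ℝ => max (s - t) 0) h, ← cfc_zero ℝ h]
        refine cfc_congr fun t _ => ?_
        rcases le_total t s with hts | hts
        · simp [hts]
        · simp [hts]
      rw [mul_assoc, ← mul_assoc _ h, ← hc.eq, mul_assoc h, hzero, mul_zero, mul_zero]
  have hbound : ∀ t ∈ spectrum ℝ h, |t| ≤ ‖h‖ * ‖(1 : A)‖ := fun t ht =>
    spectrum.norm_le_norm_mul_of_mem ht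
  have hU : F (‖h‖ * ‖(1 : A)‖) ∈ J := by
    have : cfc (fun t : ℝ => max (t - ‖h‖ * ‖(1 : A)‖) 0) h = 0 := by
      rw [← cfc_zero ℝ h]
      exact cfc_congr fun t ht => max_eq_right (sub_nonpos.mpr (abs_le.mp (hbound t ht)).2)
    simp [hF, this]
  have hV : G (-(‖h‖ * ‖(1 : A)‖)) ∈ J := by
    have : cfc (fun t : ℝ => max (-(‖h‖ * ‖(1 : A)‖) - t) 0) h = 0 := by
      rw [← cfc_zero ℝ h]
      exact cfc_congr fun t ht => max_eq_right (sub_nonpos.mpr (abs_le.mp (hbound t ht)).1)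
    simp [hG, this]
  obtain ⟨c, -, hc⟩ := isPreconnected_closed_iff.mp (isPreconnected_univ (α := ℝ))
    (F ⁻¹' J) (G ⁻¹' J) (hJ.preimage hFcont) (hJ.preimage hGcont)
    (fun s _ => hcover s) ⟨_, trivial, hU⟩ ⟨_, trivial, hV⟩
  exact ⟨c, hsub c ▸ J.sub_mem hc.1 hc.2⟩

/-- `p` is a self-adjoint idempotent modulo `J` whose corner is one-dimensional modulo `J`. -/
structure IsMinimalProjectionMod (J : Submodule ℂ A) (p : A) : Prop where
  isSelfAdjoint : IsSelfAdjoint p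
  mul_self_sub_mem : p * p - p ∈ J
  notMem : p ∉ J
  corner : ∀ a, ∃ c : ℂ, p * a * p - c • p ∈ J

theorem exists_isMinimalProjectionMod (hl : ∀ a, ∀ b ∈ J, a * b ∈ J) (hr : ∀ a, ∀ b ∈ J, b * a ∈ J)
    (hJ : IsClosed (J : Set A)) (hT : NoTriangularSequence J) {E : Set A}
    (hE : ¬ rightAnnihilatorMod J E ⊆ J) :
    ∃ p ∈ rightAnnihilatorMod J E, IsMinimalProjectionMod J p := by
  obtain ⟨M, ⟨hEM, hMJ⟩, hmin⟩ := hT.wellFounded.has_min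
    {F | E ⊆ F ∧ ¬ rightAnnihilatorMod J F ⊆ J} ⟨E, subset_rfl, hE⟩
  have hR : ∀ b ∈ rightAnnihilatorMod J M, ∀ c, b * c ∈ rightAnnihilatorMod J M :=
    fun b hb c a ha => by
      rw [← mul_assoc]
      exact hr _ _ (hb a ha)
  have hprime : ∀ u ∈ rightAnnihilatorMod J M, IsSelfAdjoint u → ∀ v ∈ rightAnnihilatorMod J M,
      u * v ∈ J → u ∈ J ∨ v ∈ J := fun u hu husa v hv huv => by
    by_contra! hcon
    have hsub := rightAnnihilatorMod_anti J (Set.subset_insert u M)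
    refine hmin (insert u M) ⟨hEM.trans (Set.subset_insert u M), fun h => hcon.2 (h ?_)⟩
      ⟨hsub, fun h => hcon.1 (mem_of_star_mul_self_mem hl hJ ?_)⟩
    · rintro a (rfl | ha)
      exacts [huv, hv a ha]
    · rw [husa.star_eq]
      exact h hu u (Set.mem_insert u M)
  have hscale : ∀ h ∈ rightAnnihilatorMod J M, IsSelfAdjoint h → ∃ c : ℝ, h * h - c • h ∈ J :=
    fun h hh hsa => exists_mul_self_sub_smul_mem hJ hsa fun u v hu huv =>
      hprime _ (hR _ hh u) hu _ (hR _ hh v) (huv ▸ J.zero_mem)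
  obtain ⟨x, hxM, hxJ⟩ := Set.not_subset.mp hMJ
  have hxx : x * star x ∉ J := fun h => hxJ <| by
    have : star x ∈ J := mem_of_star_mul_self_mem hl hJ (by simpa using h)
    simpa using star_mem_of_mem hl hr hJ this
  obtain ⟨c, hc⟩ := hscale _ (hR x hxM (star x)) (.mul_star_self x)
  have hc0 : c ≠ 0 := by
    rintro rfl
    refine hxx (mem_of_star_mul_self_mem hl hJ ?_)
    simpa using hc
  have hsmul : ∀ (k : ℝ) (b : A), b ∈ J → k • b ∈ J := fun k b hb => by
    simpa using J.smul_mem (k : ℂ) hb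
  set p : A := c⁻¹ • (x * star x) with hp
  have hpsa : IsSelfAdjoint p := .smul (.all _) (.mul_star_self x)
  have hpM : p ∈ rightAnnihilatorMod J M := fun a ha => by
    rw [hp, mul_smul_comm]
    exact hsmul _ _ (hR x hxM _ a ha)
  have hpp : p * p - p ∈ J := by
    have : p * p - p = (c⁻¹ * c⁻¹) • (x * star x * (x * star x) - c • (x * star x)) := by
      rw [hp, smul_mul_smul_comm, smul_sub, smul_smul, mul_assoc c⁻¹, inv_mul_cancel₀ hc0, mul_one]
    rw [this]
    exact hsmul _ _ hc
  have hpJ : p ∉ J := fun h => hxx <| by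
    simpa [hp, smul_smul, hc0] using hsmul c _ h
  have hcorner : ∀ a, IsSelfAdjoint a → ∃ d : ℂ, p * a * p - d • p ∈ J := fun a ha => by
    have hksa : IsSelfAdjoint (p * a * p) := by
      simpa [hpsa.star_eq] using ha.conjugate p
    have hkM : p * a * p ∈ rightAnnihilatorMod J M := mul_assoc p a p ▸ hR p hpM _
    obtain ⟨d, hd⟩ := hscale _ hkM hksa
    have hsubM : p * a * p - d • p ∈ rightAnnihilatorMod J M := fun b hb => by
      rw [mul_sub, mul_smul_comm d b p]
      exact J.sub_mem (hkM b hb) (hsmul _ _ (hpM b hb))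
    have hprod : p * a * p * (p * a * p - d • p) ∈ J := by
      have : p * a * p * (p * a * p - d • p)
          = (p * a * p * (p * a * p) - d • (p * a * p)) - d • (p * a * (p * p - p)) := by
        simp only [mul_sub, smul_sub, mul_smul_comm, mul_assoc]
        abel
      rw [this]
      exact J.sub_mem hd (hsmul _ _ (hl _ _ hpp))
    rcases hprime _ hkM hksa _ hsubM hprod with h | h
    · exact ⟨0, by simpa using h⟩
    · exact ⟨d, by simpa using h⟩
  refine ⟨p, rightAnnihilatorMod_anti J hEM hpM, hpsa, hpp, hpJ, fun a => ?_⟩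
  obtain ⟨d, hd⟩ := hcorner (realPart a) (realPart a).2
  obtain ⟨e, he⟩ := hcorner (imaginaryPart a) (imaginaryPart a).2
  refine ⟨d + Complex.I * e, ?_⟩
  have : p * a * p - (d + Complex.I * e) • p = (p * (realPart a : A) * p - d • p)
      + Complex.I • (p * (imaginaryPart a : A) * p - e • p) := by
    nth_rw 1 [← realPart_add_I_smul_imaginaryPart a]
    simp only [mul_add, add_mul, mul_smul_comm, smul_mul_assoc, smul_sub, add_smul, smul_smul]
    abel
  rw [this]
  exact J.add_mem hd (J.smul_mem _ he)

theorem exists_finite_isMinimalProjectionMod (hl : ∀ a, ∀ b ∈ J, a * b ∈ J)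
    (hr : ∀ a, ∀ b ∈ J, b * a ∈ J) (hJ : IsClosed (J : Set A)) (hT : NoTriangularSequence J) :
    ∃ E : Set A, E.Finite ∧ (∀ p ∈ E, IsMinimalProjectionMod J p) ∧
      rightAnnihilatorMod J E ⊆ J := by
  obtain ⟨E, ⟨hfin, hE⟩, hmin⟩ := hT.wellFounded.has_min
    {F : Set A | F.Finite ∧ ∀ p ∈ F, IsMinimalProjectionMod J p} ⟨∅, by simp⟩
  refine ⟨E, hfin, hE, ?_⟩
  by_contra hcon
  obtain ⟨p, hpE, hp⟩ := exists_isMinimalProjectionMod hl hr hJ hT hcon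
  refine hmin (insert p E) ⟨hfin.insert p, ?_⟩
    ⟨rightAnnihilatorMod_anti J (Set.subset_insert p E), fun h => hp.notMem ?_⟩
  · rintro q (rfl | hq)
    exacts [hp, hE q hq]
  · have := J.sub_mem (h hpE p (Set.mem_insert p E)) hp.mul_self_sub_mem
    simpa using this

/-- The off-diagonal corner between two minimal projections is at most one-dimensional. -/
theorem IsMinimalProjectionMod.exists_offDiagonal (hl : ∀ a, ∀ b ∈ J, a * b ∈ J)
    (hr : ∀ a, ∀ b ∈ J, b * a ∈ J) (hJ : IsClosed (J : Set A)) {p q : A}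
    (hp : IsMinimalProjectionMod J p) (hq : IsMinimalProjectionMod J q) :
    ∃ x, ∀ a, ∃ c : ℂ, p * a * q - c • x ∈ J := by
  by_cases h : ∀ a, p * a * q ∈ J
  · exact ⟨0, fun a => ⟨0, by simpa using h a⟩⟩
  push Not at h
  obtain ⟨b, hb⟩ := h
  set x := p * b * q with hx
  refine ⟨x, fun a => ?_⟩
  have hstar : star x = q * star b * p := by
    simp [hx, hp.isSelfAdjoint.star_eq, hq.isSelfAdjoint.star_eq, mul_assoc]
  obtain ⟨c, hc⟩ := hp.corner (a * q * (q * star b))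
  obtain ⟨d, hd⟩ := hq.corner (star b * p * (p * b))
  have hd0 : d ≠ 0 := by
    rintro rfl
    refine hb (mem_of_star_mul_self_mem hl hJ ?_)
    rw [hstar, hx]
    simpa [mul_assoc] using hd
  refine ⟨d⁻¹ * c, ?_⟩
  have key : d • (p * a * q) - c • x = (p * (a * q * (q * star b)) * p - c • p) * x
      - p * a * q * (q * (star b * p * (p * b)) * q - d • q)
      - d • (p * a * (q * q - q)) + c • ((p * p - p) * (b * q)) := by
    simp only [hx, mul_sub, sub_mul, smul_sub, mul_smul_comm, smul_mul_assoc, mul_assoc]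
    abel
  have hmem : d • (p * a * q) - c • x ∈ J := by
    rw [key]
    exact J.add_mem (J.sub_mem (J.sub_mem (hr _ _ hc) (hl _ _ hd))
      (J.smul_mem _ (hl _ _ hq.mul_self_sub_mem))) (J.smul_mem _ (hr _ _ hp.mul_self_sub_mem))
  have := J.smul_mem d⁻¹ hmem
  rwa [smul_sub, smul_smul, smul_smul, inv_mul_cancel₀ hd0, one_smul] at this

theorem finiteDimensional_quotient_of_noTriangularSequence (hl : ∀ a, ∀ b ∈ J, a * b ∈ J)
    (hr : ∀ a, ∀ b ∈ J, b * a ∈ J) (hJ : IsClosed (J : Set A)) (hT : NoTriangularSequence J) :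
    FiniteDimensional ℂ (A ⧸ J) := by
  obtain ⟨E, hfin, hE, hann⟩ := exists_finite_isMinimalProjectionMod hl hr hJ hT
  have : Finite E := hfin
  let φ : E × E → A →ₗ[ℂ] A ⧸ J := fun i =>
    J.mkQ ∘ₗ LinearMap.mulRight ℂ (i.2 : A) ∘ₗ LinearMap.mulLeft ℂ (i.1 : A)
  have hφ : ∀ i a, φ i a = J.mkQ (i.1 * a * i.2) := fun i a => rfl
  have hfd : ∀ i, FiniteDimensional ℂ (LinearMap.range (φ i)) := fun i => by
    obtain ⟨x, hx⟩ := (hE i.1 i.1.2).exists_offDiagonal hl hr hJ (hE i.2 i.2.2)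
    refine Submodule.finiteDimensional_of_le (S₂ := Submodule.span ℂ {J.mkQ x}) ?_
    rintro _ ⟨a, rfl⟩
    obtain ⟨c, hc⟩ := hx a
    rw [Submodule.mem_span_singleton]
    refine ⟨c, ?_⟩
    rw [hφ, ← map_smul, eq_comm]
    exact (Submodule.Quotient.eq J).mpr hc
  let Φ : A →ₗ[ℂ] ∀ i, LinearMap.range (φ i) := LinearMap.pi fun i => (φ i).rangeRestrict
  have hker : LinearMap.ker Φ ≤ J := fun a ha => by
    have h1 : ∀ i, φ i a = 0 := fun i => congrArg Subtype.val (congrFun (LinearMap.mem_ker.mp ha) i)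
    have h2 : ∀ p ∈ E, ∀ q ∈ E, p * a * q ∈ J := fun p hp q hq =>
      (Submodule.Quotient.mk_eq_zero J).mp (h1 (⟨p, hp⟩, ⟨q, hq⟩))
    refine hann fun p hp => ?_
    have h3 : star (p * a) ∈ J := hann fun q hq => by
      simpa [(hE q hq).isSelfAdjoint.star_eq] using star_mem_of_mem hl hr hJ (h2 p hp q hq)
    simpa using star_mem_of_mem hl hr hJ h3
  have : FiniteDimensional ℂ (A ⧸ LinearMap.ker Φ) :=
    Module.Finite.equiv Φ.quotKerEquivRange.symm
  exact Module.Finite.of_surjective (Submodule.factor hker) (Submodule.factor_surjective hker)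

end FiniteCodimension

theorem LinearMap.exists_norm_le_lt_norm_of_not_continuous {E F : Type*} [NormedAddCommGroup E]
    [NormedSpace ℂ E] [NormedAddCommGroup F] [NormedSpace ℂ F] {f : E →ₗ[ℂ] F}
    (hf : ¬ Continuous f) {δ : ℝ} (hδ : 0 < δ) (B : ℝ) : ∃ x, ‖x‖ ≤ δ ∧ B < ‖f x‖ := by
  by_contra! h
  obtain ⟨C, hC⟩ := LinearMap.bound_of_ball_bound hδ B f fun z hz =>
    h z (mem_ball_zero_iff.mp hz).le
  exact hf (AddMonoidHomClass.continuous_of_bound f C hC)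

section ContinuityIdeal

variable {A X : Type*} [CStarAlgebra A] [NormedAddCommGroup X] [NormedSpace ℂ X]

/-- The elements `a` for which `t ↦ a • D t` is continuous. -/
def continuityIdeal (L : A →L[ℂ] X →L[ℂ] X) (D : A →ₗ[ℂ] X) : Submodule ℂ A where
  carrier := {a | Continuous fun t => L a (D t)}
  zero_mem' := by simpa using continuous_const
  add_mem' {a b} ha hb := by
    have h := Continuous.add ha hb
    simp only [Set.mem_ofPred_eq, map_add, add_apply]
    exact h
  smul_mem' c a ha := by
    have h := Continuous.const_smul ha c
    simp only [Set.mem_ofPred_eq, map_smul, smul_apply]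
    exact h

variable {L : A →L[ℂ] X →L[ℂ] X} {R : X → A →L[ℂ] X} {D : A →ₗ[ℂ] X}

theorem isClosed_continuityIdeal : IsClosed (continuityIdeal L D : Set A) := by
  refine isClosed_of_closure_subset fun a ha => ?_
  obtain ⟨u, hu, hlim⟩ := mem_closure_iff_seq_limit.mp ha
  let g : ℕ → A →L[ℂ] X := fun n => ⟨(L (u n)).toLinearMap ∘ₗ D, hu n⟩
  have hg : Filter.Tendsto (fun n t => g n t) Filter.atTop (nhds fun t => L a (D t)) := by
    rw [tendsto_pi_nhds]
    exact fun t => (((L.flip (D t)).continuous.tendsto a).comp hlim :)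
  exact (continuousLinearMapOfTendsto g hg).continuous

theorem mem_continuityIdeal_iff (hD : ∀ a b, D (a * b) = L a (D b) + R (D a) b) {a : A} :
    a ∈ continuityIdeal L D ↔ Continuous fun t => D (a * t) := by
  have h : (fun t => D (a * t)) = fun t => L a (D t) + R (D a) t := funext fun t => hD a t
  rw [h]
  refine ⟨fun ha => Continuous.add ha (R (D a)).continuous, fun ha => ?_⟩
  have h' : Continuous fun t => L a (D t) + R (D a) t - R (D a) t := ha.sub (R (D a)).continuous
  change Continuous fun t => L a (D t)
  simpa only [add_sub_cancel_right] using h'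

theorem mul_mem_continuityIdeal (hL : ∀ a b x, L (a * b) x = L a (L b x)) (a : A) :
    ∀ b ∈ continuityIdeal L D, a * b ∈ continuityIdeal L D := fun b hb => by
  have hb' : Continuous fun t => L b (D t) := hb
  change Continuous fun t => L (a * b) (D t)
  simp only [hL]
  exact (L a).continuous.comp hb'

theorem mul_mem_continuityIdeal_right (hD : ∀ a b, D (a * b) = L a (D b) + R (D a) b) (a : A) :
    ∀ b ∈ continuityIdeal L D, b * a ∈ continuityIdeal L D := fun b hb => by
  rw [mem_continuityIdeal_iff hD] at hb ⊢
  simpa only [mul_assoc, Function.comp_def] using hb.comp (continuous_const_mul a)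

theorem continuous_restrict_continuityIdeal (hL : ∀ a b x, L (a * b) x = L a (L b x))
    (hD : ∀ a b, D (a * b) = L a (D b) + R (D a) b) :
    Continuous (D ∘ₗ (continuityIdeal L D).subtype) := by
  by_contra hcon
  choose x hx hDx using fun n : ℕ => LinearMap.exists_norm_le_lt_norm_of_not_continuous hcon
    (δ := (1 / 2) ^ n) (by positivity) n
  have hsum : Summable fun n => ‖(x n : A)‖ ^ 2 := by
    refine Summable.of_nonneg_of_le (fun n => by positivity) (fun n => ?_)
      (summable_geometric_of_lt_one (r := ((1 / 2 : ℝ) ^ 2)) (by norm_num) (by norm_num))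
    rw [← pow_mul, mul_comm 2 n, pow_mul]
    gcongr
    exact hx n
  obtain ⟨a, ha, hy⟩ := exists_common_factor (mul_mem_continuityIdeal hL)
    (mul_mem_continuityIdeal_right hD) isClosed_continuityIdeal (fun n => (x n).2) hsum
  let T : A →L[ℂ] X := ⟨D ∘ₗ LinearMap.mulLeft ℂ a, (mem_continuityIdeal_iff hD).mp ha⟩
  obtain ⟨n, hn⟩ := exists_nat_ge (‖T‖ * ‖a‖)
  obtain ⟨y, hxy, hyn⟩ := hy n
  have h1 : ‖T y‖ ≤ ‖T‖ * ‖a‖ := (T.le_opNorm y).trans (by gcongr)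
  have h2 : (n : ℝ) < ‖T y‖ := by
    have := hDx n
    rwa [LinearMap.comp_apply, Submodule.subtype_apply, hxy] at this
  linarith

/-- A gliding hump argument. -/
theorem noTriangularSequence_continuityIdeal (hL : ∀ a b x, L (a * b) x = L a (L b x))
    (hD : ∀ a b, D (a * b) = L a (D b) + R (D a) b) :
    NoTriangularSequence (continuityIdeal L D) := by
  intro a b hab
  by_contra! hcon
  let T : continuityIdeal L D →L[ℂ] X := ⟨_, continuous_restrict_continuityIdeal hL hD⟩
  have hT : ∀ x ∈ continuityIdeal L D, ‖D x‖ ≤ ‖T‖ * ‖x‖ := fun x hx => T.le_opNorm ⟨x, hx⟩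
  have hstep : ∀ (n : ℕ) (s : A), ∃ t, ‖b n * t‖ ≤ 1 * (1 / 2) ^ n ∧
      n * ‖a n‖ + 2 * ‖R (D (a n))‖ + ‖D (a n * s)‖ + 2 * ‖T‖ * ‖a n‖ < ‖D (a n * (b n * t))‖ := by
    intro n s
    have hnot : ¬ Continuous (D ∘ₗ LinearMap.mulLeft ℂ (a n * b n)) := fun h =>
      hcon n ((mem_continuityIdeal_iff hD).mpr h)
    obtain ⟨t, ht, hDt⟩ := LinearMap.exists_norm_le_lt_norm_of_not_continuous hnot
      (δ := (1 / 2) ^ n / (‖b n‖ + 1)) (by positivity)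
      (n * ‖a n‖ + 2 * ‖R (D (a n))‖ + ‖D (a n * s)‖ + 2 * ‖T‖ * ‖a n‖)
    refine ⟨t, ?_, by simpa [mul_assoc] using hDt⟩
    rw [le_div_iff₀ (by positivity)] at ht
    have := norm_mul_le (b n) t
    nlinarith [norm_nonneg t]
  choose t ht hDt using hstep
  obtain ⟨s, hs0, hs⟩ : ∃ s : ℕ → A, s 0 = 0 ∧ ∀ n, s (n + 1) = s n + b n * t n (s n) :=
    ⟨fun n => Nat.rec 0 (fun n s => s + b n * t n s) n, rfl, fun _ => rfl⟩
  have hdist : ∀ n, dist (s n) (s (n + 1)) ≤ 1 * (1 / 2) ^ n := fun n => by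
    rw [hs, dist_self_add_right]
    exact ht n (s n)
  obtain ⟨c, hc⟩ := cauchySeq_tendsto_of_complete
    (cauchySeq_of_le_geometric (1 / 2) 1 (by norm_num) hdist)
  have hcdist : ∀ n, ‖c - s n‖ ≤ 2 := fun n => by
    rw [← dist_eq_norm, dist_comm]
    refine (dist_le_of_le_geometric_of_tendsto (1 / 2) 1 (by norm_num) hdist hc n).trans ?_
    have : (1 / 2 : ℝ) ^ n ≤ 1 := pow_le_one₀ (by norm_num) (by norm_num)
    have : 1 * (1 / 2 : ℝ) ^ n / (1 - 1 / 2) = 2 * (1 / 2) ^ n := by ring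
    linarith
  have hc2 : ‖c‖ ≤ 2 := by simpa [hs0] using hcdist 0
  have htail : ∀ n, a n * (c - s (n + 1)) ∈ continuityIdeal L D := fun n => by
    refine isClosed_continuityIdeal.mem_of_tendsto ((hc.sub_const (s (n + 1))).const_mul (a n)) ?_
    filter_upwards [Filter.eventually_ge_atTop (n + 1)] with m hm
    induction m, hm using Nat.le_induction with
    | base => simp
    | succ m hm ih =>
      have : a n * (s (m + 1) - s (n + 1))
          = a n * (s m - s (n + 1)) + a n * b m * t m (s m) := by
        rw [hs m, mul_assoc, ← mul_add]
        congr 1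
        abel
      rw [this]
      exact add_mem ih (mul_mem_continuityIdeal_right hD _ _ (hab n m hm))
  obtain ⟨n, hn⟩ := exists_nat_ge (‖L‖ * ‖D c‖)
  have hsplit : a n * (b n * t n (s n)) = a n * c - a n * s n - a n * (c - s (n + 1)) := by
    rw [hs, ← mul_sub, ← mul_sub]
    congr 1
    abel
  have h1 : ‖D (a n * c)‖ ≤ ‖L‖ * ‖a n‖ * ‖D c‖ + ‖R (D (a n))‖ * 2 := by
    rw [hD]
    refine (norm_add_le _ _).trans (add_le_add (L.le_opNorm₂ _ _) ?_)
    exact (R (D (a n))).le_opNorm c |>.trans (by gcongr)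
  have h2 : ‖D (a n * (c - s (n + 1)))‖ ≤ ‖T‖ * (‖a n‖ * 2) :=
    (hT _ (htail n)).trans <| mul_le_mul_of_nonneg_left ((norm_mul_le _ _).trans <|
      mul_le_mul_of_nonneg_left (hcdist (n + 1)) (norm_nonneg _)) T.opNorm_nonneg
  have h3 : ‖D (a n * (b n * t n (s n)))‖
      ≤ ‖D (a n * c)‖ + ‖D (a n * s n)‖ + ‖D (a n * (c - s (n + 1)))‖ := by
    rw [hsplit, map_sub, map_sub]
    exact (norm_sub_le _ _).trans (by gcongr; exact norm_sub_le _ _)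
  have h4 := hDt n (s n)
  nlinarith [mul_le_mul_of_nonneg_right hn (norm_nonneg (a n))]

/-- Ringrose's theorem for unital C⋆-algebras. -/
theorem continuous_derivation_of_unital (hL : ∀ a b x, L (a * b) x = L a (L b x))
    (hD : ∀ a b, D (a * b) = L a (D b) + R (D a) b) : Continuous D := by
  set J := continuityIdeal L D
  have hJ : IsClosed (J : Set A) := isClosed_continuityIdeal
  have : FiniteDimensional ℂ (A ⧸ J) := finiteDimensional_quotient_of_noTriangularSequence
    (mul_mem_continuityIdeal hL) (mul_mem_continuityIdeal_right hD) hJ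
    (noTriangularSequence_continuityIdeal hL hD)
  obtain ⟨σ, hσ⟩ := J.mkQ.exists_rightInverse_of_surjective J.range_mkQ
  have hmk : Continuous J.mkQ := continuous_quot_mk
  have hσc : Continuous σ := σ.continuous_of_finiteDimensional
  have hDσ : Continuous (D ∘ₗ σ) := (D ∘ₗ σ).continuous_of_finiteDimensional
  have hmem : ∀ a, a - σ (J.mkQ a) ∈ J := fun a =>
    (Submodule.Quotient.eq J).mp (LinearMap.congr_fun hσ (J.mkQ a)).symm
  have hproj : Continuous fun a => (⟨a - σ (J.mkQ a), hmem a⟩ : J) :=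
    (continuous_id.sub (hσc.comp hmk)).subtype_mk _
  have h := ((continuous_restrict_continuityIdeal hL hD).comp hproj).add (hDσ.comp hmk)
  have heq : ⇑D = fun a => D (a - σ (J.mkQ a)) + D (σ (J.mkQ a)) := by
    funext a
    rw [← map_add, sub_add_cancel]
  rw [heq]
  exact h

end ContinuityIdeal

/-- (Ringrose) Every derivation from a C*-algebra `A` into a Banach `A`-bimodule `X`
is automatically continuous.  The bimodule actions are given by the bounded bilinear
maps `l` and `r`. -/
theorem ringrose_automatic_continuity (A X : Type*)
    [NonUnitalNormedRing A] [StarRing A] [CStarRing A] [CompleteSpace A]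
    [NormedSpace ℂ A] [IsScalarTower ℂ A A] [SMulCommClass ℂ A A] [StarModule ℂ A]
    [NormedAddCommGroup X] [NormedSpace ℂ X] [CompleteSpace X]
    (l : A →ₗ[ℂ] X →ₗ[ℂ] X) (r : X →ₗ[ℂ] A →ₗ[ℂ] X)
    (hlbdd : ∃ C : ℝ, ∀ (a : A) (x : X), ‖l a x‖ ≤ C * ‖a‖ * ‖x‖)
    (hrbdd : ∃ C : ℝ, ∀ (x : X) (a : A), ‖r x a‖ ≤ C * ‖x‖ * ‖a‖)
    (hmod₁ : ∀ (a b : A) (x : X), l a (l b x) = l (a * b) x)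
    (hmod₂ : ∀ (a b : A) (x : X), l a (r x b) = r (l a x) b)
    (hmod₃ : ∀ (a b : A) (x : X), r (r x a) b = r x (a * b))
    (D : A →ₗ[ℂ] X)
    (hD : ∀ a b : A, D (a * b) = l a (D b) + r (D a) b) :
    Continuous D := by
  let _ : NonUnitalCStarAlgebra A := {}
  obtain ⟨C, hC⟩ := hlbdd
  obtain ⟨C', hC'⟩ := hrbdd
  let fstL : Unitization ℂ A →L[ℂ] ℂ :=
    ⟨(Unitization.fstHom ℂ A).toLinearMap, Unitization.continuous_fst⟩
  let sndL : Unitization ℂ A →L[ℂ] A :=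
    ⟨Unitization.sndHom ℂ ℂ A, Unitization.continuous_snd⟩
  let L : Unitization ℂ A →L[ℂ] X →L[ℂ] X :=
    fstL.smulRight (ContinuousLinearMap.id ℂ X) + (l.mkContinuous₂ C hC).comp sndL
  have hLapp : ∀ z x, L z x = z.fst • x + l z.snd x := fun z x => rfl
  let R : X → Unitization ℂ A →L[ℂ] X := fun x =>
    fstL.smulRight x + ((r x).mkContinuous (C' * ‖x‖) (hC' x)).comp sndL
  have hRapp : ∀ z x, R x z = z.fst • x + r x z.snd := fun z x => rfl
  have hcont : Continuous (D ∘ₗ Unitization.sndHom ℂ ℂ A) := by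
    refine continuous_derivation_of_unital (L := L) (R := R) (fun a b x => ?_) fun a b => ?_
    · simp only [hLapp, Unitization.fst_mul, Unitization.snd_mul, map_add, map_smul,
        LinearMap.add_apply, LinearMap.smul_apply, hmod₁, smul_add, mul_smul]
      abel
    · simp only [hLapp, hRapp, LinearMap.comp_apply, Unitization.sndHom_apply,
        Unitization.snd_mul, map_add, map_smul, hD]
      abel
  exact hcont.comp Unitization.continuous_inr
end
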